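/- arXiv:2507.23468 — 7 statements merged into one kernel-verified Lean document; each statement's English description precedes it below -/
import Mathlib

section
/- Let (ψ_n)_{n∈ℕ} be a sequence of complex numbers such that Σ_{n≥0} s^n |ψ_n|² < ∞ for some real s > 1. Then: (i) for every z ∈ ℂ the series π^{-1/4} e^{-z²/2} Σ_{n≥0} ψ_n (2^n n!)^{-1/2} H_n(z) converges absolutely, so the extended wavefunction ψ : ℂ → ℂ is well defined; (ii) ψ is an entire function (complex-analytic on all of ℂ); (iii) there exist constants K > 0 and L > 0 such that |ψ(z)|² ≤ K e^{L|z|²} for every z ∈ ℂ, i.e. ψ has order of growth at most 2. -/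
open scoped BigOperators

/-- The `n`-th physicist Hermite polynomial evaluated at `z`:
`H_n(z) = 2^(n/2) He_n(z√2) = (√2)^n He_n(√2 z)`, with `He_n` the probabilist
Hermite polynomial (Mathlib's `Polynomial.hermite n`). -/
noncomputable def physHermite (n : ℕ) (z : ℂ) : ℂ :=
  ((Real.sqrt 2 : ℝ) : ℂ) ^ n *
    Polynomial.aeval (((Real.sqrt 2 : ℝ) : ℂ) * z) (Polynomial.hermite n)

/-- The `n`-th term of the Hermite series of the wavefunction. -/
noncomputable def wfTerm (ψ : ℕ → ℂ) (z : ℂ) (n : ℕ) : ℂ :=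
  ψ n * ((Real.sqrt (2 ^ n * n.factorial) : ℝ) : ℂ)⁻¹ * physHermite n z

/-- The extended wavefunction
`ψ(z) = π^(-1/4) e^(-z²/2) Σ_n ψ_n (2^n n!)^(-1/2) H_n(z)`. -/
noncomputable def extWf (ψ : ℕ → ℂ) (z : ℂ) : ℂ :=
  ((Real.pi ^ ((1 : ℝ) / 4) : ℝ) : ℂ)⁻¹ * Complex.exp (-z ^ 2 / 2) * ∑' n, wfTerm ψ z n

/-!
The three-term recurrence propagates the bound `|He_n(w)| ≤ √(n!) exp (2 |w| √n)` by induction,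
since `2 √(n + 1) (√(n + 1) - √n) ≥ 1`. Young's inequality trades the mixed exponent
`|z| √n` for `ε n + C_ε |z|²`, so the `n`-th term of the Hermite series is at most
`exp (C_ε |z|²) · |ψ_n| exp (ε n)`. For `ε` small, the energy bound makes `∑ |ψ_n| exp (ε n)`
finite (Young again, against a geometric series), and since the estimate separates `z` from `n`,
it gives absolute and locally uniform convergence as well as Gaussian growth of the sum.
-/

section Hermite

open Polynomial

theorem derivative_hermite_add_one (n : ℕ) :
    derivative (hermite (n + 1)) = ((n : ℤ[X]) + 1) * hermite n := by
  induction n with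
  | zero => simp
  | succ m ih =>
    have h_deriv : derivative (hermite (m + 2)) =
        hermite (m + 1) + X * derivative (hermite (m + 1))
          - derivative (derivative (hermite (m + 1))) := by
      rw [hermite_succ (m + 1)]
      simp
    have h_deriv_ih : derivative (((m : ℤ[X]) + 1) * hermite m) =
        ((m : ℤ[X]) + 1) * derivative (hermite m) := by
      simp
    rw [h_deriv, ih, h_deriv_ih, hermite_succ m]
    push_cast
    ring

theorem hermite_add_two (n : ℕ) :
    hermite (n + 2) = X * hermite (n + 1) - ((n : ℤ[X]) + 1) * hermite n := by
  rw [hermite_succ (n + 1), derivative_hermite_add_one]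

/-- A majorant of `‖He_n(w)‖` on `‖w‖ ≤ r`, shaped so that it is a supersolution of the
three-term recurrence satisfied by these norms. -/
noncomputable def hermiteMajorant (r : ℝ) (n : ℕ) : ℝ :=
  √(n.factorial : ℝ) * Real.exp (2 * r * √(n : ℝ))

theorem hermiteMajorant_nonneg (r : ℝ) (n : ℕ) : 0 ≤ hermiteMajorant r n := by
  unfold hermiteMajorant
  positivity

theorem add_sqrt_add_one_le_mul_exp {r x : ℝ} (hr : 0 ≤ r) (hx : 0 ≤ x) :
    r + √(x + 1) ≤ √(x + 1) * Real.exp (2 * r * (√(x + 1) - √x)) := by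
  have h_gap : 1 ≤ 2 * √(x + 1) * (√(x + 1) - √x) := by
    nlinarith [Real.sq_sqrt hx, Real.sq_sqrt (add_nonneg hx zero_le_one),
      sq_nonneg (√(x + 1) - √x)]
  calc r + √(x + 1)
      ≤ r * (2 * √(x + 1) * (√(x + 1) - √x)) + √(x + 1) := by
        gcongr
        exact le_mul_of_one_le_right hr h_gap
    _ = √(x + 1) * (2 * r * (√(x + 1) - √x) + 1) := by ring
    _ ≤ √(x + 1) * Real.exp (2 * r * (√(x + 1) - √x)) := by
        gcongr
        exact Real.add_one_le_exp _

theorem sqrt_factorial_add_one (n : ℕ) :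
    √((n + 1).factorial : ℝ) = √((n : ℝ) + 1) * √(n.factorial : ℝ) := by
  rw [Nat.factorial_succ, Nat.cast_mul, Real.sqrt_mul (Nat.cast_nonneg _), Nat.cast_add_one]

theorem add_one_mul_hermiteMajorant_le {r : ℝ} (hr : 0 ≤ r) (n : ℕ) :
    ((n : ℝ) + 1) * hermiteMajorant r n ≤ √((n : ℝ) + 1) * hermiteMajorant r (n + 1) := by
  have h_sq : √((n : ℝ) + 1) * √((n : ℝ) + 1) = n + 1 := Real.mul_self_sqrt (by positivity)
  unfold hermiteMajorant
  calc ((n : ℝ) + 1) * (√(n.factorial : ℝ) * Real.exp (2 * r * √(n : ℝ)))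
      ≤ ((n : ℝ) + 1) * (√(n.factorial : ℝ) * Real.exp (2 * r * √((n + 1 : ℕ) : ℝ))) := by
        gcongr
        exact n.le_succ
    _ = √((n : ℝ) + 1) *
          (√((n + 1).factorial : ℝ) * Real.exp (2 * r * √((n + 1 : ℕ) : ℝ))) := by
        nth_rw 1 [← h_sq]
        rw [sqrt_factorial_add_one]
        ring

theorem add_sqrt_mul_hermiteMajorant_le {r : ℝ} (hr : 0 ≤ r) (n : ℕ) :
    (r + √((n : ℝ) + 1)) * hermiteMajorant r n ≤ hermiteMajorant r (n + 1) := by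
  unfold hermiteMajorant
  calc (r + √((n : ℝ) + 1)) * (√(n.factorial : ℝ) * Real.exp (2 * r * √(n : ℝ)))
      ≤ √((n : ℝ) + 1) * Real.exp (2 * r * (√((n : ℝ) + 1) - √(n : ℝ))) *
          (√(n.factorial : ℝ) * Real.exp (2 * r * √(n : ℝ))) := by
        gcongr
        exact add_sqrt_add_one_le_mul_exp hr n.cast_nonneg
    _ = √((n : ℝ) + 1) * √(n.factorial : ℝ) *
          Real.exp (2 * r * (√((n : ℝ) + 1) - √(n : ℝ)) + 2 * r * √(n : ℝ)) := by
        rw [Real.exp_add]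
        ring
    _ = √((n + 1).factorial : ℝ) * Real.exp (2 * r * √((n + 1 : ℕ) : ℝ)) := by
        rw [sqrt_factorial_add_one, Nat.cast_add_one, ← mul_add, sub_add_cancel]

theorem hermiteMajorant_recurrence_le {r : ℝ} (hr : 0 ≤ r) (n : ℕ) :
    r * hermiteMajorant r (n + 1) + ((n : ℝ) + 1) * hermiteMajorant r n ≤
      hermiteMajorant r (n + 2) := by
  have h_sqrt : √((n : ℝ) + 1) ≤ √(((n + 1 : ℕ) : ℝ) + 1) := by
    gcongr
    exact n.le_succ
  calc r * hermiteMajorant r (n + 1) + ((n : ℝ) + 1) * hermiteMajorant r n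
      ≤ r * hermiteMajorant r (n + 1) + √((n : ℝ) + 1) * hermiteMajorant r (n + 1) :=
        add_le_add le_rfl (add_one_mul_hermiteMajorant_le hr n)
    _ = (r + √((n : ℝ) + 1)) * hermiteMajorant r (n + 1) := (add_mul _ _ _).symm
    _ ≤ (r + √(((n + 1 : ℕ) : ℝ) + 1)) * hermiteMajorant r (n + 1) := by
        gcongr
        exact hermiteMajorant_nonneg r (n + 1)
    _ ≤ hermiteMajorant r (n + 2) := add_sqrt_mul_hermiteMajorant_le hr (n + 1)

theorem norm_aeval_hermite_le {A : Type*} [NormedRing A] [NormOneClass A] (w : A) :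
    ∀ n : ℕ, ‖aeval w (hermite n)‖ ≤ hermiteMajorant ‖w‖ n
  | 0 => by simp [hermiteMajorant]
  | 1 => by
    have h_exp := Real.add_one_le_exp (2 * ‖w‖)
    simp only [hermite_one, aeval_X, hermiteMajorant, Nat.factorial_one, Nat.cast_one,
      Real.sqrt_one, one_mul, mul_one]
    linarith [norm_nonneg w]
  | n + 2 => by
    have h_cast : ‖(n : A) + 1‖ ≤ (n : ℝ) + 1 := by
      simpa using Nat.norm_cast_le (α := A) (n + 1)
    calc ‖aeval w (hermite (n + 2))‖
        = ‖w * aeval w (hermite (n + 1)) - ((n : A) + 1) * aeval w (hermite n)‖ := by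
          simp only [hermite_add_two, map_sub, map_mul, map_add, aeval_X, map_natCast, map_one]
      _ ≤ ‖w‖ * ‖aeval w (hermite (n + 1))‖ + ‖(n : A) + 1‖ * ‖aeval w (hermite n)‖ :=
          (norm_sub_le _ _).trans (add_le_add (norm_mul_le _ _) (norm_mul_le _ _))
      _ ≤ ‖w‖ * hermiteMajorant ‖w‖ (n + 1) + ((n : ℝ) + 1) * hermiteMajorant ‖w‖ n := by
          gcongr
          · exact norm_aeval_hermite_le w (n + 1)
          · exact norm_aeval_hermite_le w n
      _ ≤ hermiteMajorant ‖w‖ (n + 2) := hermiteMajorant_recurrence_le (norm_nonneg w) n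

theorem norm_physHermite_le (n : ℕ) (z : ℂ) :
    ‖physHermite n z‖ ≤
      √(2 ^ n * n.factorial : ℝ) * Real.exp (2 * (√2 * ‖z‖) * √(n : ℝ)) := by
  have h_norm_sqrt : ‖((√2 : ℝ) : ℂ)‖ = √2 := Complex.norm_of_nonneg (Real.sqrt_nonneg 2)
  have h_sqrt_pow : √(2 ^ n : ℝ) = √2 ^ n := by
    rw [Real.sqrt_eq_iff_mul_self_eq (by positivity) (by positivity), ← mul_pow,
      Real.mul_self_sqrt zero_le_two]
  calc ‖physHermite n z‖
      = √2 ^ n * ‖aeval (((√2 : ℝ) : ℂ) * z) (hermite n)‖ := by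
        rw [physHermite, norm_mul, norm_pow, h_norm_sqrt]
    _ ≤ √2 ^ n * hermiteMajorant (√2 * ‖z‖) n := by
        gcongr
        simpa only [norm_mul, h_norm_sqrt] using norm_aeval_hermite_le (((√2 : ℝ) : ℂ) * z) n
    _ = √(2 ^ n * n.factorial : ℝ) * Real.exp (2 * (√2 * ‖z‖) * √(n : ℝ)) := by
        rw [hermiteMajorant, Real.sqrt_mul (by positivity), h_sqrt_pow, mul_assoc (√2 ^ n)]

theorem differentiable_physHermite (n : ℕ) : Differentiable ℂ (physHermite n) := by
  have h_comp : Differentiable ℂ fun z : ℂ => aeval (((√2 : ℝ) : ℂ) * z) (hermite n) :=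
    (Polynomial.differentiable_aeval (𝕜 := ℂ) (hermite n)).comp
      (differentiable_id.const_mul ((√2 : ℝ) : ℂ))
  exact h_comp.const_mul _

end Hermite

theorem summable_norm_mul_pow_of_summable_pow_mul_norm_sq {E : Type*} [SeminormedAddGroup E]
    {a : ℕ → E} {q s : ℝ} (hq : 0 ≤ q) (hqs : q ^ 2 < s)
    (ha : Summable fun n => s ^ n * ‖a n‖ ^ 2) :
    Summable fun n => ‖a n‖ * q ^ n := by
  have hs : 0 < s := (sq_nonneg q).trans_lt hqs
  have h_geom : Summable fun n : ℕ => (q ^ 2 / s) ^ n :=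
    summable_geometric_of_lt_one (by positivity) ((div_lt_one hs).2 hqs)
  refine Summable.of_nonneg_of_le (fun n => by positivity) (fun n => ?_) (ha.add h_geom)
  have h_young := two_mul_le_add_mul_sq (a := ‖a n‖) (b := q ^ n) (pow_pos hs n)
  have h_geom_term : (s ^ n)⁻¹ * (q ^ n) ^ 2 = (q ^ 2 / s) ^ n := by
    rw [div_pow, pow_right_comm, inv_mul_eq_div]
  have h_nonneg : 0 ≤ ‖a n‖ * q ^ n := by positivity
  linarith

theorem differentiable_tsum_of_norm_le_on_balls {ι E : Type*} [NormedAddCommGroup E]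
    [NormedSpace ℂ E] [CompleteSpace E] {F : ι → ℂ → E} (hF : ∀ i, Differentiable ℂ (F i))
    (h_bound : ∀ R : ℝ, ∃ u : ι → ℝ, Summable u ∧
      ∀ i, ∀ z ∈ Metric.ball (0 : ℂ) R, ‖F i z‖ ≤ u i) :
    Differentiable ℂ fun z => ∑' i, F i z := by
  intro z
  obtain ⟨u, hu, hFu⟩ := h_bound (‖z‖ + 1)
  have h_ball : DifferentiableOn ℂ (fun z => ∑' i, F i z) (Metric.ball 0 (‖z‖ + 1)) :=
    Complex.differentiableOn_tsum_of_summable_norm hu (fun i => (hF i).differentiableOn)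
      Metric.isOpen_ball hFu
  exact h_ball.differentiableAt (Metric.isOpen_ball.mem_nhds (by simp))

section Wavefunction

variable {ψ : ℕ → ℂ} {ε : ℝ}

theorem norm_wfTerm_le (ψ : ℕ → ℂ) (hε : 0 < ε) (z : ℂ) (n : ℕ) :
    ‖wfTerm ψ z n‖ ≤ Real.exp (2 / ε * ‖z‖ ^ 2) * (‖ψ n‖ * Real.exp ε ^ n) := by
  have h_norm_pos : 0 < √(2 ^ n * n.factorial : ℝ) := by positivity
  have h_young : 2 * (√2 * ‖z‖) * √(n : ℝ) ≤ 2 / ε * ‖z‖ ^ 2 + n * ε := by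
    calc 2 * (√2 * ‖z‖) * √(n : ℝ)
        ≤ ε⁻¹ * (√2 * ‖z‖) ^ 2 + ε⁻¹⁻¹ * √(n : ℝ) ^ 2 :=
          two_mul_le_add_mul_sq (inv_pos.2 hε)
      _ = 2 / ε * ‖z‖ ^ 2 + n * ε := by
          rw [mul_pow, Real.sq_sqrt zero_le_two, Real.sq_sqrt n.cast_nonneg, inv_inv]
          ring
  calc ‖wfTerm ψ z n‖
      = ‖ψ n‖ * (√(2 ^ n * n.factorial : ℝ))⁻¹ * ‖physHermite n z‖ := by
        rw [wfTerm, norm_mul, norm_mul, norm_inv, Complex.norm_of_nonneg h_norm_pos.le]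
    _ ≤ ‖ψ n‖ * (√(2 ^ n * n.factorial : ℝ))⁻¹ *
          (√(2 ^ n * n.factorial : ℝ) * Real.exp (2 / ε * ‖z‖ ^ 2 + n * ε)) := by
        gcongr
        exact (norm_physHermite_le n z).trans (by gcongr)
    _ = ‖ψ n‖ * Real.exp (2 / ε * ‖z‖ ^ 2 + n * ε) := by
        rw [mul_assoc, inv_mul_cancel_left₀ h_norm_pos.ne']
    _ = Real.exp (2 / ε * ‖z‖ ^ 2) * (‖ψ n‖ * Real.exp ε ^ n) := by
        rw [Real.exp_add, Real.exp_nat_mul]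
        ring

theorem summable_norm_wfTerm (hε : 0 < ε) (hψ : Summable fun n => ‖ψ n‖ * Real.exp ε ^ n)
    (z : ℂ) : Summable fun n => ‖wfTerm ψ z n‖ :=
  (hψ.mul_left _).of_nonneg_of_le (fun _ => norm_nonneg _) (norm_wfTerm_le ψ hε z)

theorem differentiable_tsum_wfTerm (hε : 0 < ε)
    (hψ : Summable fun n => ‖ψ n‖ * Real.exp ε ^ n) :
    Differentiable ℂ fun z => ∑' n, wfTerm ψ z n := by
  refine differentiable_tsum_of_norm_le_on_balls
    (fun n => (differentiable_physHermite n).const_mul _)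
    (fun R => ⟨_, hψ.mul_left (Real.exp (2 / ε * R ^ 2)), fun n z hz => ?_⟩)
  have hzR : ‖z‖ ≤ R := (mem_ball_zero_iff.1 hz).le
  exact (norm_wfTerm_le ψ hε z n).trans (by gcongr)

theorem differentiable_extWf (hε : 0 < ε) (hψ : Summable fun n => ‖ψ n‖ * Real.exp ε ^ n) :
    Differentiable ℂ (extWf ψ) := by
  have h_prefactor : Differentiable ℂ fun z : ℂ =>
      ((Real.pi ^ ((1 : ℝ) / 4) : ℝ) : ℂ)⁻¹ * Complex.exp (-z ^ 2 / 2) := by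
    fun_prop
  exact h_prefactor.mul (differentiable_tsum_wfTerm hε hψ)

theorem norm_extWf_le (hε : 0 < ε) (hψ : Summable fun n => ‖ψ n‖ * Real.exp ε ^ n) (z : ℂ) :
    ‖extWf ψ z‖ ≤ (Real.pi ^ ((1 : ℝ) / 4))⁻¹ * (∑' n, ‖ψ n‖ * Real.exp ε ^ n) *
      Real.exp ((1 / 2 + 2 / ε) * ‖z‖ ^ 2) := by
  have h_gauss : ‖Complex.exp (-z ^ 2 / 2)‖ ≤ Real.exp (‖z‖ ^ 2 / 2) := by
    calc ‖Complex.exp (-z ^ 2 / 2)‖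
        ≤ Real.exp ‖-z ^ 2 / 2‖ := Complex.norm_exp_le_exp_norm _
      _ = Real.exp (‖z‖ ^ 2 / 2) := by rw [norm_div, norm_neg, norm_pow, Complex.norm_two]
  have h_series : ‖∑' n, wfTerm ψ z n‖ ≤
      Real.exp (2 / ε * ‖z‖ ^ 2) * ∑' n, ‖ψ n‖ * Real.exp ε ^ n :=
    tsum_of_norm_bounded (hψ.hasSum.mul_left _) (norm_wfTerm_le ψ hε z)
  calc ‖extWf ψ z‖
      = (Real.pi ^ ((1 : ℝ) / 4))⁻¹ * ‖Complex.exp (-z ^ 2 / 2)‖ * ‖∑' n, wfTerm ψ z n‖ := by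
        rw [extWf, norm_mul, norm_mul, norm_inv, Complex.norm_of_nonneg (by positivity)]
    _ ≤ (Real.pi ^ ((1 : ℝ) / 4))⁻¹ * Real.exp (‖z‖ ^ 2 / 2) *
          (Real.exp (2 / ε * ‖z‖ ^ 2) * ∑' n, ‖ψ n‖ * Real.exp ε ^ n) := by
        gcongr
    _ = (Real.pi ^ ((1 : ℝ) / 4))⁻¹ * (∑' n, ‖ψ n‖ * Real.exp ε ^ n) *
          Real.exp ((1 / 2 + 2 / ε) * ‖z‖ ^ 2) := by
        rw [add_mul, one_div_mul_eq_div, Real.exp_add]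
        ring

end Wavefunction

/-- **Entire wavefunctions.** Under the energy bound `Σ s^n |ψ_n|² < ∞` for some `s > 1`:
(i) the Hermite series of the wavefunction converges absolutely at every `z ∈ ℂ`;
(ii) the extended wavefunction is entire;
(iii) `|ψ(z)|² ≤ K e^(L|z|²)` for some constants `K, L > 0`, i.e. order of growth at most 2. -/
theorem entire_wavefunction (ψ : ℕ → ℂ) (s : ℝ) (hs : 1 < s)
    (hE : Summable fun n => s ^ n * ‖ψ n‖ ^ 2) :
    (∀ z : ℂ, Summable fun n => ‖wfTerm ψ z n‖) ∧
    (∀ z : ℂ, AnalyticAt ℂ (extWf ψ) z) ∧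
    (∃ K > (0 : ℝ), ∃ L > (0 : ℝ), ∀ z : ℂ,
      ‖extWf ψ z‖ ^ 2 ≤ K * Real.exp (L * ‖z‖ ^ 2)) := by
  obtain ⟨ε, hε, hεs⟩ : ∃ ε > 0, Real.exp ε ^ 2 < s := by
    refine ⟨Real.log s / 4, by linarith [Real.log_pos hs], ?_⟩
    rw [← Real.exp_nat_mul, ← Real.lt_log_iff_exp_lt (by linarith)]
    push_cast
    linarith [Real.log_pos hs]
  have hψ : Summable fun n => ‖ψ n‖ * Real.exp ε ^ n :=
    summable_norm_mul_pow_of_summable_pow_mul_norm_sq (Real.exp_nonneg ε) hεs hE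
  refine ⟨summable_norm_wfTerm hε hψ, fun z => (differentiable_extWf hε hψ).analyticAt z, ?_⟩
  set C := (Real.pi ^ ((1 : ℝ) / 4))⁻¹ * ∑' n, ‖ψ n‖ * Real.exp ε ^ n
  set L := 2 * (1 / 2 + 2 / ε)
  refine ⟨C ^ 2 + 1, by positivity, L, by positivity, fun z => ?_⟩
  calc ‖extWf ψ z‖ ^ 2
      ≤ (C * Real.exp ((1 / 2 + 2 / ε) * ‖z‖ ^ 2)) ^ 2 := by
        gcongr
        exact norm_extWf_le hε hψ z
    _ = C ^ 2 * Real.exp (L * ‖z‖ ^ 2) := by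
        rw [mul_pow, ← Real.exp_nat_mul, ← mul_assoc, Nat.cast_ofNat]
    _ ≤ (C ^ 2 + 1) * Real.exp (L * ‖z‖ ^ 2) := by
        gcongr
        exact le_add_of_nonneg_right zero_le_one
end

section
/- Let (ψ_n)_{n∈ℕ} be a sequence of complex numbers with 0 < Σ_{n≥0} |ψ_n|² < ∞ whose stellar function F(z) = Σ_{n≥0} ψ_n z^n/√(n!) satisfies F(z) = Q(z) e^{α z² + β z + γ} for all z ∈ ℂ, for some complex polynomial Q of degree exactly r and some α, β, γ ∈ ℂ (i.e. the state has stellar rank r). Then the series defining the extended wavefunction converges absolutely for every z ∈ ℂ, and there exist a complex polynomial P of degree exactly r and a, b, c ∈ ℂ with Re(a) > 0 such that ψ(z) = P(z) e^{-a z² + b z + c} for all z ∈ ℂ. In particular, ψ has exactly r complex zeros counted with multiplicity. -/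
open scoped BigOperators

/-- The stellar (Bargmann) function `F(z) = Σ_n ψ_n z^n / √(n!)`. -/
noncomputable def stellar (ψ : ℕ → ℂ) (z : ℂ) : ℂ :=
  ∑' n, ψ n * z ^ n / ((Real.sqrt n.factorial : ℝ) : ℂ)

/-- The order of vanishing of `f` at `z`: the least `m` such that the `m`-th
iterated derivative of `f` does not vanish at `z` (for an entire function not
identically zero this is the multiplicity of `z` as a zero of `f`). -/
noncomputable def vanishingOrder (f : ℂ → ℂ) (z : ℂ) : ℕ :=
  sInf {m : ℕ | iteratedDeriv m f z ≠ 0}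

/-!
Let `F` be the stellar function and let `X` be a standard real Gaussian variable. Since
`Heₙ(w) = 𝔼[(w + iX)ⁿ]`, summing the Hermite series under the expectation gives
`∑ ψₙ (2ⁿ n!)^(-1/2) Hₙ(z) = 𝔼[F(√2 z + iX)]`, a backward heat flow applied to `F`. The exchange of
sum and expectation needs `F` to grow strictly slower than `e^{|z|²/2}`. For square-summable
coefficients Cauchy–Schwarz only gives `F(z) = o(e^{|z|²/2})`, but a function
`Q e^{αz² + βz + γ}` can be this small along the ray where `αz²` is positive only if `|α| < 1/2`.
The flow maps the Gaussian `e^{αz² + βz + γ}` to another Gaussian, and `q` times the former to `T q`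
times the latter, where Stein's identity gives `(1 + 2α) T(zq) = (w - β) T q - T(q')`. Hence `T`
preserves the degree of polynomials.
-/

namespace StellarRank

open Asymptotics Filter MeasureTheory ProbabilityTheory Polynomial
open scoped NNReal Topology

section Growth

/-- `F(z) = O(e^{κ|z|²})` for some `κ < 1/2`, i.e. strictly below the order of growth of a general
element of the Bargmann space. The requirement `0 ≤ κ` costs no generality and makes the bound
monotone in `‖z‖`. -/
def IsSubBargmann (F : ℂ → ℂ) : Prop :=
  ∃ κ : ℝ, 0 ≤ κ ∧ κ < 1 / 2 ∧ F =O[⊤] fun z => Real.exp (κ * ‖z‖ ^ 2)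

lemma isBigO_exp_quadratic {κ κ' : ℝ} (h : κ < κ') (b c : ℝ) :
    (fun t : ℝ => Real.exp (κ * t ^ 2 + b * t + c)) =O[⊤] fun t => Real.exp (κ' * t ^ 2) := by
  refine isBigO_top.2 ⟨Real.exp (b ^ 2 / (4 * (κ' - κ)) + c), fun t => ?_⟩
  rw [Real.norm_eq_abs, Real.norm_eq_abs, Real.abs_exp, Real.abs_exp, ← Real.exp_add,
    Real.exp_le_exp]
  have hpos : 0 < κ' - κ := sub_pos.2 h
  have hsq : b ^ 2 / (4 * (κ' - κ)) - b * t + (κ' - κ) * t ^ 2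
      = (b - 2 * (κ' - κ) * t) ^ 2 / (4 * (κ' - κ)) := by field_simp; ring
  have : 0 ≤ (b - 2 * (κ' - κ) * t) ^ 2 / (4 * (κ' - κ)) := by positivity
  linarith

lemma isBigO_cexp_quadratic {α : ℂ} {κ : ℝ} (h : ‖α‖ < κ) (β γ : ℂ) :
    (fun z => Complex.exp (α * z ^ 2 + β * z + γ)) =O[⊤] fun z => Real.exp (κ * ‖z‖ ^ 2) := by
  refine IsBigO.trans (isBigO_top.2 ⟨1, fun z => ?_⟩)
    ((isBigO_exp_quadratic h ‖β‖ ‖γ‖).comp_tendsto tendsto_top)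
  rw [one_mul, Function.comp_apply, Complex.norm_exp, Real.norm_eq_abs, Real.abs_exp,
    Real.exp_le_exp]
  calc (α * z ^ 2 + β * z + γ).re ≤ ‖α * z ^ 2 + β * z + γ‖ := Complex.re_le_norm _
    _ ≤ ‖α * z ^ 2‖ + ‖β * z‖ + ‖γ‖ := norm_add₃_le
    _ = ‖α‖ * ‖z‖ ^ 2 + ‖β‖ * ‖z‖ + ‖γ‖ := by simp only [norm_mul, norm_pow]

lemma isBigO_polynomial_exp_sq {δ : ℝ} (hδ : 0 < δ) (p : ℂ[X]) :
    (fun z => p.eval z) =O[⊤] fun z => Real.exp (δ * ‖z‖ ^ 2) := by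
  have hexp : (fun z : ℂ => Real.exp ‖z‖) =O[⊤] fun z => Real.exp (δ * ‖z‖ ^ 2) :=
    ((isBigO_exp_quadratic hδ 1 0).comp_tendsto (tendsto_top (f := norm))).congr_left
      fun z => by simp
  have hpow (n : ℕ) : (fun z : ℂ => z ^ n) =O[⊤] fun z => Real.exp (δ * ‖z‖ ^ 2) := by
    refine IsBigO.trans (isBigO_top.2 ⟨n.factorial, fun z => ?_⟩) hexp
    rw [norm_pow, Real.norm_eq_abs, Real.abs_exp, ← div_le_iff₀' (by positivity)]
    exact Real.pow_div_factorial_le_exp _ (norm_nonneg z) n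
  simp only [eval_eq_sum_range]
  exact IsBigO.fun_sum fun n _ => (hpow n).const_mul_left _

lemma isSubBargmann_cexp_quadratic {α : ℂ} (hα : ‖α‖ < 1 / 2) (β γ : ℂ) :
    IsSubBargmann fun z => Complex.exp (α * z ^ 2 + β * z + γ) := by
  obtain ⟨κ, hακ, hκ⟩ := exists_between hα
  exact ⟨κ, (norm_nonneg α).trans hακ.le, hκ, isBigO_cexp_quadratic hακ β γ⟩

namespace IsSubBargmann

variable {F : ℂ → ℂ}

lemma mul_polynomial (hF : IsSubBargmann F) (p : ℂ[X]) :
    IsSubBargmann fun z => p.eval z * F z := by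
  obtain ⟨κ, hκ0, hκ, hO⟩ := hF
  obtain ⟨κ', hκκ', hκ'⟩ := exists_between hκ
  refine ⟨κ', hκ0.trans hκκ'.le, hκ',
    ((isBigO_polynomial_exp_sq (sub_pos.2 hκκ') p).mul hO).congr_right fun z => ?_⟩
  rw [← Real.exp_add]
  ring_nf

protected lemma deriv (hF : IsSubBargmann F) (hd : Differentiable ℂ F) :
    IsSubBargmann (deriv F) := by
  obtain ⟨κ, hκ0, hκ, hO⟩ := hF
  obtain ⟨κ', hκκ', hκ'⟩ := exists_between hκ
  obtain ⟨M, hM⟩ := isBigO_top.1 hO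
  refine ⟨κ', hκ0.trans hκκ'.le, hκ', IsBigO.trans (isBigO_top.2 ⟨|M|, fun z => ?_⟩)
    ((isBigO_exp_quadratic hκκ' (2 * κ) κ).comp_tendsto (tendsto_top (f := norm)))⟩
  have hcircle (w : ℂ) (hw : w ∈ Metric.sphere z 1) :
      ‖F w‖ ≤ |M| * Real.exp (κ * (‖z‖ + 1) ^ 2) := by
    have hwz : ‖w‖ ≤ ‖z‖ + 1 := by
      rw [← mem_sphere_iff_norm.1 hw]
      exact norm_le_norm_add_norm_sub' w z
    calc ‖F w‖ ≤ M * Real.exp (κ * ‖w‖ ^ 2) := by simpa using hM w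
      _ ≤ |M| * Real.exp (κ * (‖z‖ + 1) ^ 2) := by gcongr; exact le_abs_self M
  have := Complex.norm_deriv_le_of_forall_mem_sphere_norm_le one_pos hd.diffContOnCl hcircle
  rw [div_one] at this
  refine this.trans_eq ?_
  rw [Function.comp_apply, Real.norm_eq_abs, Real.abs_exp]
  ring_nf

end IsSubBargmann

end Growth

section GaussianMeasure

variable {E : Type*} [NormedAddCommGroup E] [NormedSpace ℝ E]

lemma integrable_gaussianReal_iff {μ : ℝ} {v : ℝ≥0} (hv : v ≠ 0) {f : ℝ → E} :
    Integrable f (gaussianReal μ v) ↔ Integrable fun x => gaussianPDFReal μ v x • f x := by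
  rw [gaussianReal_of_var_ne_zero μ hv,
    integrable_withDensity_iff_integrable_smul' (measurable_gaussianPDF μ v)
      (ae_of_all _ fun _ => gaussianPDF_lt_top)]
  simp only [toReal_gaussianPDF]

lemma hasDerivAt_gaussianPDFReal (μ : ℝ) {v : ℝ≥0} (hv : v ≠ 0) (x : ℝ) :
    HasDerivAt (gaussianPDFReal μ v) (-((x - μ) / v) * gaussianPDFReal μ v x) x := by
  have h := ((((hasDerivAt_id x).sub_const μ).pow 2).neg.div_const (2 * v : ℝ)).exp.const_mul
    (√(2 * Real.pi * v))⁻¹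
  refine h.congr_deriv ?_
  have : (v : ℝ) ≠ 0 := by exact_mod_cast hv
  simp only [gaussianPDFReal, Pi.neg_apply, Pi.pow_apply, id_eq]
  field_simp
  ring

lemma integral_sub_smul_gaussianReal {μ : ℝ} {v : ℝ≥0} {f f' : ℝ → E}
    (hderiv : ∀ x, HasDerivAt f (f' x) x) (hf : Integrable f (gaussianReal μ v))
    (hf' : Integrable f' (gaussianReal μ v))
    (hxf : Integrable (fun x => (x - μ) • f x) (gaussianReal μ v)) :
    ∫ x, (x - μ) • f x ∂gaussianReal μ v = v • ∫ x, f' x ∂gaussianReal μ v := by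
  rcases eq_or_ne v 0 with rfl | hv
  · rw [gaussianReal_zero_var, zero_smul]
    exact integral_eq_zero_of_ae (by simp [EventuallyEq, ae_dirac_eq])
  have hv' : (v : ℝ) ≠ 0 := by exact_mod_cast hv
  have hprod (x : ℝ) : HasDerivAt (fun y => gaussianPDFReal μ v y • f y)
      (gaussianPDFReal μ v x • (f' x - (v : ℝ)⁻¹ • (x - μ) • f x)) x := by
    refine ((hasDerivAt_gaussianPDFReal μ hv x).smul (hderiv x)).congr_deriv ?_
    module
  have hxf' : Integrable (fun x => (v : ℝ)⁻¹ • (x - μ) • f x) (gaussianReal μ v) := hxf.smul _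
  have hzero := integral_eq_zero_of_hasDerivAt_of_integrable hprod
    ((integrable_gaussianReal_iff hv).1 (hf'.sub hxf')) ((integrable_gaussianReal_iff hv).1 hf)
  rw [← integral_gaussianReal_eq_integral_smul hv, integral_sub hf' hxf',
    integral_smul, sub_eq_zero] at hzero
  rw [hzero, NNReal.smul_def, smul_inv_smul₀ hv']

lemma integrable_exp_mul_sq_gaussianReal {v : ℝ≥0} {κ : ℝ} (h : 2 * v * κ < 1) :
    Integrable (fun x => Real.exp (κ * x ^ 2)) (gaussianReal 0 v) := by
  rcases eq_or_ne v 0 with rfl | hv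
  · rw [gaussianReal_zero_var]
    exact integrable_dirac (by simp)
  have : (0 : ℝ) < v := by positivity
  have hrate : 0 < 1 / (2 * v) - κ := by
    rw [sub_pos, lt_div_iff₀ (by positivity)]
    linarith
  rw [integrable_gaussianReal_iff hv]
  refine ((integrable_exp_neg_mul_sq hrate).const_mul (√(2 * Real.pi * v))⁻¹).congr
    (ae_of_all _ fun x => ?_)
  simp only [gaussianPDFReal, smul_eq_mul, mul_assoc, ← Real.exp_add]
  congr 2
  ring

end GaussianMeasure

section BackwardHeat

/-- `e^{-∂²/2} F`, the solution at time `1` of the backward heat equation `∂ₜu = -∂²u/2` with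
initial value an entire function `F`, written as the Gaussian average
`w ↦ 𝔼[F (w + iX)]`, `X ~ N(0, 1)`. It maps `zⁿ` to the probabilist Hermite polynomial `Heₙ`. -/
noncomputable def backwardHeat (F : ℂ → ℂ) (w : ℂ) : ℂ :=
  ∫ x : ℝ, F (w + x * Complex.I) ∂gaussianReal 0 1

lemma norm_add_ofReal_mul_I_le (w : ℂ) (x : ℝ) : ‖w + x * Complex.I‖ ≤ |x| + ‖w‖ := by
  simpa [add_comm] using norm_add_le w (x * Complex.I)

lemma integrable_exp_mul_abs_add_sq {κ : ℝ} (hκ : κ < 1 / 2) (b : ℝ) :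
    Integrable (fun x : ℝ => Real.exp (κ * (|x| + b) ^ 2)) (gaussianReal 0 1) := by
  obtain ⟨κ', hκκ', hκ'⟩ := exists_between hκ
  obtain ⟨M, hM⟩ := isBigO_top.1 (isBigO_exp_quadratic hκκ' (2 * κ * b) (κ * b ^ 2))
  have hint : Integrable (fun x => Real.exp (κ' * x ^ 2)) (gaussianReal 0 1) :=
    integrable_exp_mul_sq_gaussianReal (by push_cast; linarith)
  refine (hint.const_mul M).mono' (by fun_prop) (ae_of_all _ fun x => ?_)
  have := hM |x|
  rw [Real.norm_of_nonneg (Real.exp_pos (κ' * _)).le, sq_abs] at this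
  refine le_of_eq_of_le ?_ this
  congr 2
  rw [← sq_abs x]
  ring

lemma IsSubBargmann.integrable_gaussianReal {F : ℂ → ℂ} (hF : IsSubBargmann F)
    (hc : Continuous F) (w : ℂ) :
    Integrable (fun x : ℝ => F (w + x * Complex.I)) (gaussianReal 0 1) := by
  obtain ⟨κ, hκ0, hκ, hO⟩ := hF
  obtain ⟨M, hM⟩ := isBigO_top.1 hO
  refine ((integrable_exp_mul_abs_add_sq hκ ‖w‖).const_mul |M|).mono'
    (by fun_prop) (ae_of_all _ fun x => ?_)
  calc ‖F (w + x * Complex.I)‖ ≤ M * Real.exp (κ * ‖w + x * Complex.I‖ ^ 2) := by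
        simpa using hM (w + x * Complex.I)
    _ ≤ |M| * Real.exp (κ * (|x| + ‖w‖) ^ 2) := by
        gcongr
        · exact le_abs_self M
        · exact norm_add_ofReal_mul_I_le w x

lemma backwardHeat_add {F G : ℂ → ℂ} (hF : IsSubBargmann F) (hFc : Continuous F)
    (hG : IsSubBargmann G) (hGc : Continuous G) (w : ℂ) :
    backwardHeat (fun z => F z + G z) w = backwardHeat F w + backwardHeat G w :=
  integral_add (hF.integrable_gaussianReal hFc w) (hG.integrable_gaussianReal hGc w)

lemma backwardHeat_const_mul (c : ℂ) (F : ℂ → ℂ) (w : ℂ) :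
    backwardHeat (fun z => c * F z) w = c * backwardHeat F w :=
  integral_const_mul c _

/-- Stein's identity along the vertical line through `w`. -/
lemma backwardHeat_id_mul {F : ℂ → ℂ} (hF : IsSubBargmann F) (hd : Differentiable ℂ F) (w : ℂ) :
    backwardHeat (fun z => z * F z) w = w * backwardHeat F w - backwardHeat (deriv F) w := by
  have hderiv (x : ℝ) : HasDerivAt (fun y : ℝ => F (w + y * Complex.I))
      (Complex.I * deriv F (w + x * Complex.I)) x := by
    have hline : HasDerivAt (fun y : ℝ => w + (y : ℂ) * Complex.I) Complex.I x := by
      simpa using ((hasDerivAt_id x).ofReal_comp.mul_const Complex.I).const_add w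
    simpa [Function.comp_def, mul_comm] using (hd (w + x * Complex.I)).hasDerivAt.scomp x hline
  have hzF : IsSubBargmann fun z => z * F z := by simpa using hF.mul_polynomial X
  have hFi := hF.integrable_gaussianReal hd.continuous w
  have hzFi := hzF.integrable_gaussianReal (continuous_id.mul hd.continuous) w
  have hF'i := (hF.deriv hd).integrable_gaussianReal hd.contDiff.continuous_deriv_one w
  have hsplit (x : ℝ) : x • F (w + x * Complex.I) =
      Complex.I * (w * F (w + x * Complex.I)
        - (w + x * Complex.I) * F (w + x * Complex.I)) := by
    rw [Complex.real_smul]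
    linear_combination (x * F (w + x * Complex.I)) * Complex.I_sq
  have hstein := integral_sub_smul_gaussianReal hderiv hFi (hF'i.const_mul _) (by
    simp only [sub_zero, hsplit]
    exact ((hFi.const_mul w).sub hzFi).const_mul _)
  simp only [sub_zero, hsplit, one_smul] at hstein
  rw [integral_const_mul, integral_const_mul, integral_sub (hFi.const_mul w) hzFi,
    integral_const_mul] at hstein
  have := mul_left_cancel₀ Complex.I_ne_zero hstein
  simp only [backwardHeat]
  linear_combination -this

end BackwardHeat

section GaussianImages

lemma derivative_hermite_succ (n : ℕ) :
    derivative (hermite (n + 1)) = ((n + 1 : ℕ) : ℤ[X]) * hermite n := by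
  induction n with
  | zero => simp
  | succ n ih =>
    rw [hermite_succ (n + 1), derivative_sub, derivative_mul, ih, derivative_X, derivative_mul,
      derivative_natCast]
    push_cast
    linear_combination (-((n : ℤ[X]) + 1)) * hermite_succ n

lemma hermite_add_two (n : ℕ) :
    hermite (n + 2) = X * hermite (n + 1) - ((n + 1 : ℕ) : ℤ[X]) * hermite n := by
  rw [hermite_succ, derivative_hermite_succ]

lemma isSubBargmann_pow (n : ℕ) : IsSubBargmann fun z => z ^ n := by
  simpa using (isSubBargmann_cexp_quadratic (α := 0) (by simp) 0 0).mul_polynomial (X ^ n)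

lemma backwardHeat_pow (n : ℕ) (w : ℂ) :
    backwardHeat (fun z => z ^ n) w = aeval w (hermite n) := by
  induction n using Nat.twoStepInduction with
  | zero => simp [backwardHeat]
  | one => simpa [backwardHeat] using backwardHeat_id_mul (isSubBargmann_pow 0) (by fun_prop) w
  | more n ih ih' =>
    have hstein := backwardHeat_id_mul (isSubBargmann_pow (n + 1)) (by fun_prop) w
    have hderiv : deriv (fun z : ℂ => z ^ (n + 1)) = fun z => ((n + 1 : ℕ) : ℂ) * z ^ n := by
      ext z
      simp
    rw [hderiv, backwardHeat_const_mul, ih, ih'] at hstein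
    simp only [pow_succ' _ (n + 1), hstein, hermite_add_two, map_sub, map_mul, aeval_X, map_natCast]

lemma one_add_ne_zero_of_norm_lt_one {R : Type*} [NormedRing R] [NormOneClass R] {x : R}
    (hx : ‖x‖ < 1) : 1 + x ≠ 0 := by
  intro h
  rw [eq_neg_of_add_eq_zero_right h, norm_neg, norm_one] at hx
  exact lt_irrefl _ hx

lemma norm_two_mul_lt_one {α : ℂ} (hα : ‖α‖ < 1 / 2) : ‖2 * α‖ < 1 := by
  rw [norm_mul, Complex.norm_ofNat]
  linarith

lemma one_add_two_mul_ne_zero {α : ℂ} (hα : ‖α‖ < 1 / 2) : 1 + 2 * α ≠ 0 :=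
  one_add_ne_zero_of_norm_lt_one (norm_two_mul_lt_one hα)

lemma backwardHeat_cexp_quadratic {α : ℂ} (hα : ‖α‖ < 1 / 2) (β γ w : ℂ) :
    backwardHeat (fun z => Complex.exp (α * z ^ 2 + β * z + γ)) w =
      (√(2 * Real.pi))⁻¹ * (Real.pi / (α + 1 / 2)) ^ (1 / 2 : ℂ) *
        Complex.exp (α / (1 + 2 * α) * w ^ 2 + β / (1 + 2 * α) * w +
          (γ - β ^ 2 / (1 + 2 * α) / 2)) := by
  have hre : (-(α + 1 / 2)).re < 0 := by
    have hα' : -‖α‖ ≤ α.re := (abs_le.1 (Complex.abs_re_le_norm α)).1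
    have hre_eq : (-(α + 1 / 2)).re = -(α.re + 1 / 2) := by simp [add_comm]
    linarith
  have hintegrand (x : ℝ) : gaussianPDFReal 0 1 x •
      Complex.exp (α * (w + x * Complex.I) ^ 2 + β * (w + x * Complex.I) + γ) =
      (√(2 * Real.pi))⁻¹ * Complex.exp (-(α + 1 / 2) * x ^ 2 +
        Complex.I * (2 * α * w + β) * x + (α * w ^ 2 + β * w + γ)) := by
    rw [gaussianPDFReal, Complex.real_smul]
    push_cast
    rw [mul_assoc, ← Complex.exp_add, mul_one]
    congr 2
    linear_combination (α * x ^ 2) * Complex.I_sq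
  have hexponent : α * w ^ 2 + β * w + γ
      - (Complex.I * (2 * α * w + β)) ^ 2 / (4 * -(α + 1 / 2)) =
      α / (1 + 2 * α) * w ^ 2 + β / (1 + 2 * α) * w + (γ - β ^ 2 / (1 + 2 * α) / 2) := by
    rw [show (4 * -(α + 1 / 2)) = -((1 + 2 * α) * 2) by ring, mul_pow, Complex.I_sq,
      div_neg, ← div_div]
    linear_combination (-(α * w ^ 2 + β * w)) * mul_inv_cancel₀ (one_add_two_mul_ne_zero hα)
  rw [backwardHeat, integral_gaussianReal_eq_integral_smul one_ne_zero]
  simp only [hintegrand]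
  rw [integral_const_mul, integral_cexp_quadratic hre, hexponent, neg_neg, ← mul_assoc]

lemma exists_backwardHeat_cexp_quadratic {α : ℂ} (hα : ‖α‖ < 1 / 2) (β γ : ℂ) :
    ∃ γ' : ℂ, ∀ w, backwardHeat (fun z => Complex.exp (α * z ^ 2 + β * z + γ)) w =
      Complex.exp (α / (1 + 2 * α) * w ^ 2 + β / (1 + 2 * α) * w + γ') := by
  set K : ℂ := (√(2 * Real.pi))⁻¹ * (Real.pi / (α + 1 / 2)) ^ (1 / 2 : ℂ)
  have hK : K ≠ 0 := by
    refine mul_ne_zero (by simp [Real.sqrt_ne_zero', Real.pi_pos]) ?_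
    rw [Complex.cpow_ne_zero_iff_of_exponent_ne_zero (by norm_num)]
    exact div_ne_zero (by exact_mod_cast Real.pi_ne_zero) fun h =>
      one_add_two_mul_ne_zero hα (by linear_combination 2 * h)
  refine ⟨γ - β ^ 2 / (1 + 2 * α) / 2 + Complex.log K, fun w => ?_⟩
  rw [backwardHeat_cexp_quadratic hα, ← add_assoc, Complex.exp_add _ (Complex.log K),
    Complex.exp_log hK, mul_comm]

section PolynomialMul

variable {E : ℂ → ℂ} {α β : ℂ}

lemma backwardHeat_add_polynomial_mul (hE : IsSubBargmann E) (hc : Continuous E) (p q : ℂ[X])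
    (w : ℂ) : backwardHeat (fun z => (p + q).eval z * E z) w =
      backwardHeat (fun z => p.eval z * E z) w + backwardHeat (fun z => q.eval z * E z) w := by
  simp only [eval_add, add_mul]
  exact backwardHeat_add (hE.mul_polynomial p) (p.continuous.mul hc) (hE.mul_polynomial q)
    (q.continuous.mul hc) w

lemma backwardHeat_C_mul_polynomial_mul (c : ℂ) (p : ℂ[X]) (w : ℂ) :
    backwardHeat (fun z => (C c * p).eval z * E z) w =
      c * backwardHeat (fun z => p.eval z * E z) w := by
  simp only [eval_mul, eval_C, mul_assoc, backwardHeat_const_mul]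

lemma backwardHeat_X_mul_polynomial_mul (hE : IsSubBargmann E)
    (hderiv : ∀ z, HasDerivAt E ((2 * α * z + β) * E z) z) (p : ℂ[X]) (w : ℂ) :
    (1 + 2 * α) * backwardHeat (fun z => (X * p).eval z * E z) w =
      (w - β) * backwardHeat (fun z => p.eval z * E z) w
        - backwardHeat (fun z => (derivative p).eval z * E z) w := by
  have hEd : Differentiable ℂ E := fun z => (hderiv z).differentiableAt
  have hpderiv : deriv (fun z => p.eval z * E z) =
      fun z => (derivative p + (C (2 * α) * (X * p) + C β * p)).eval z * E z := by
    ext z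
    refine ((p.hasDerivAt z).fun_mul (hderiv z)).deriv.trans ?_
    simp only [eval_add, eval_mul, eval_C, eval_X]
    ring
  have hstein := backwardHeat_id_mul (hE.mul_polynomial p) (p.differentiable.mul hEd) w
  simp only [hpderiv, backwardHeat_add_polynomial_mul hE hEd.continuous,
    backwardHeat_C_mul_polynomial_mul] at hstein
  simp only [eval_mul, eval_X, mul_assoc] at hstein ⊢
  linear_combination hstein

lemma degree_C_mul_X_sub_C_mul_sub_add_C {p p₁ p₂ : ℂ[X]} {c : ℂ} (hp : p ≠ 0) (hc : c ≠ 0)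
    (h₁ : p₁.degree = p.degree) (h₂ : p₂.degree < p.degree) (b d : ℂ) :
    (C c * ((X - C b) * p₁ - p₂) + C d).degree = (X * p + C d).degree := by
  have hlt : p.degree < 1 + p.degree := by
    rw [degree_eq_natDegree hp]
    exact_mod_cast (by omega : p.natDegree < 1 + p.natDegree)
  have hX : 0 < (X * p).degree := by
    rw [degree_mul, degree_X]
    exact (zero_le_degree_iff.2 hp).trans_lt hlt
  have hsub : (C c * ((X - C b) * p₁ - p₂)).degree = (X * p).degree := by
    have hmul : ((X - C b) * p₁).degree = 1 + p.degree := by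
      rw [degree_mul, degree_X_sub_C, h₁]
    rw [degree_C_mul hc, degree_sub_eq_left_of_degree_lt (hmul ▸ h₂.trans hlt), hmul, degree_mul,
      degree_X]
  rw [degree_add_C (hsub ▸ hX), degree_add_C hX, hsub]

lemma exists_backwardHeat_polynomial_mul (hE : IsSubBargmann E)
    (hderiv : ∀ z, HasDerivAt E ((2 * α * z + β) * E z) z) (hα : 1 + 2 * α ≠ 0) (q : ℂ[X]) :
    ∃ p : ℂ[X], p.degree = q.degree ∧
      ∀ w, backwardHeat (fun z => q.eval z * E z) w = p.eval w * backwardHeat E w := by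
  have hc : Continuous E := continuous_iff_continuousAt.2 fun z => (hderiv z).continuousAt
  induction hn : q.natDegree using Nat.strong_induction_on generalizing q with
  | _ n ih =>
    subst hn
    have hconst (c : ℂ) (w : ℂ) :
        backwardHeat (fun z => (C c).eval z * E z) w = c * backwardHeat E w := by
      simp only [eval_C, backwardHeat_const_mul]
    set q' := q.divX
    have hq : X * q' + C (q.coeff 0) = q := X_mul_divX_add q
    rcases eq_or_ne q' 0 with h0 | h0
    · rw [← hq, h0, mul_zero, zero_add]
      exact ⟨C (q.coeff 0), rfl, by simpa using hconst (q.coeff 0)⟩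
    have hq' : q'.natDegree < q.natDegree :=
      natDegree_lt_natDegree h0 (degree_divX_lt fun h => h0 (by simp [q', h]))
    obtain ⟨p₁, hp₁, heq₁⟩ := ih _ hq' q' rfl
    obtain ⟨p₂, hp₂, heq₂⟩ :=
      ih _ ((natDegree_derivative_le q').trans_lt (by omega)) (derivative q') rfl
    refine ⟨C (1 + 2 * α)⁻¹ * ((X - C β) * p₁ - p₂) + C (q.coeff 0), ?_, fun w => ?_⟩
    · rw [degree_C_mul_X_sub_C_mul_sub_add_C h0 (inv_ne_zero hα) hp₁
        (hp₂.trans_lt (degree_derivative_lt h0)), hq]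
    · have hrec := backwardHeat_X_mul_polynomial_mul hE hderiv q' w
      rw [← eq_inv_mul_iff_mul_eq₀ hα, heq₁, heq₂] at hrec
      nth_rw 1 [← hq]
      rw [backwardHeat_add_polynomial_mul hE hc, hconst, hrec]
      simp only [eval_add, eval_sub, eval_mul, eval_C, eval_X]
      ring

end PolynomialMul

lemma exists_backwardHeat_polynomial_mul_cexp_quadratic {α : ℂ} (hα : ‖α‖ < 1 / 2) (β γ : ℂ)
    (q : ℂ[X]) : ∃ p : ℂ[X], p.degree = q.degree ∧ ∃ γ' : ℂ, ∀ w,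
      backwardHeat (fun z => q.eval z * Complex.exp (α * z ^ 2 + β * z + γ)) w =
        p.eval w * Complex.exp (α / (1 + 2 * α) * w ^ 2 + β / (1 + 2 * α) * w + γ') := by
  have hderiv (z : ℂ) : HasDerivAt (fun z => Complex.exp (α * z ^ 2 + β * z + γ))
      ((2 * α * z + β) * Complex.exp (α * z ^ 2 + β * z + γ)) z := by
    refine (((((hasDerivAt_id z).pow 2).const_mul α).add
      ((hasDerivAt_id z).const_mul β)).add_const γ).cexp.congr_deriv ?_
    simp only [Pi.pow_apply, id_eq, Pi.add_apply, Nat.cast_ofNat, Nat.add_one_sub_one, pow_one,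
      mul_one]
    ring
  obtain ⟨γ', hγ'⟩ := exists_backwardHeat_cexp_quadratic hα β γ
  obtain ⟨p, hp, hpw⟩ := exists_backwardHeat_polynomial_mul
    (isSubBargmann_cexp_quadratic hα β γ) hderiv (one_add_two_mul_ne_zero hα) q
  exact ⟨p, hp, γ', fun w => by rw [hpw, hγ']⟩

end GaussianImages

section PowerSeries

variable {a : ℕ → ℂ} {F : ℂ → ℂ}

lemma hasFPowerSeriesOnBall_of_hasSum (h : ∀ z, HasSum (fun n => a n * z ^ n) (F z)) :
    HasFPowerSeriesOnBall F (FormalMultilinearSeries.ofScalars ℂ a) 0 ⊤ where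
  r_le := by
    refine (FormalMultilinearSeries.radius_eq_top_of_summable_norm _ fun r => ?_).ge
    simpa using (h r).summable.norm
  r_pos := ENNReal.zero_lt_top
  hasSum {z} _ := by simpa [mul_comm] using h z

lemma differentiable_of_hasSum (h : ∀ z, HasSum (fun n => a n * z ^ n) (F z)) :
    Differentiable ℂ F := by
  simpa [differentiableOn_univ] using (hasFPowerSeriesOnBall_of_hasSum h).differentiableOn

lemma norm_coeff_le_of_hasSum (h : ∀ z, HasSum (fun n => a n * z ^ n) (F z)) {s M : ℝ}
    (hs : 0 < s) (hM : ∀ z, ‖z‖ = s → ‖F z‖ ≤ M) (n : ℕ) : ‖a n‖ ≤ M / s ^ n := by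
  have hcauchy := Complex.norm_iteratedDeriv_le_of_forall_mem_sphere_norm_le (c := 0) n hs
    (differentiable_of_hasSum h).diffContOnCl fun z hz => hM z (by simpa using hz)
  have hcoeff := (hasFPowerSeriesOnBall_of_hasSum h).factorial_smul 1 n
  rw [← iteratedDeriv_eq_iteratedFDeriv] at hcoeff
  rw [← hcoeff, nsmul_eq_mul, norm_mul, Complex.norm_natCast, mul_div_assoc] at hcauchy
  simpa using le_of_mul_le_mul_left hcauchy (by positivity)

/-- The room between `κ` and `1 / 2` is traded for a geometric factor by applying Cauchy's estimates
on the circle of radius `t / q`. -/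
lemma IsSubBargmann.exists_norm_coeff_mul_pow_le (hF : IsSubBargmann F)
    (h : ∀ z, HasSum (fun n => a n * z ^ n) (F z)) :
    ∃ M κ q : ℝ, κ < 1 / 2 ∧ 0 ≤ q ∧ q < 1 ∧
      ∀ n t, 0 < t → ‖a n‖ * t ^ n ≤ M * Real.exp (κ * t ^ 2) * q ^ n := by
  obtain ⟨κ₀, hκ₀0, hκ₀, hO⟩ := hF
  obtain ⟨κ₁, hκ₀₁, hκ₁⟩ := exists_between hκ₀
  obtain ⟨κ, hκ₁κ, hκ⟩ := exists_between hκ₁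
  obtain ⟨M, hM⟩ := isBigO_top.1 hO
  have hκ₁0 : 0 < κ₁ := hκ₀0.trans_lt hκ₀₁
  have hκ0 : 0 < κ := hκ₁0.trans hκ₁κ
  refine ⟨|M|, κ, √(κ₁ / κ), hκ, Real.sqrt_nonneg _, ?_, fun n t ht => ?_⟩
  · rwa [Real.sqrt_lt' one_pos, one_pow, div_lt_one hκ0]
  set q := √(κ₁ / κ)
  have hq : 0 < q := Real.sqrt_pos.2 (div_pos hκ₁0 hκ0)
  have hcircle (z : ℂ) (hz : ‖z‖ = t / q) : ‖F z‖ ≤ |M| * Real.exp (κ * t ^ 2) := by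
    have hexponent : κ₁ * ‖z‖ ^ 2 = κ * t ^ 2 := by
      rw [hz, div_pow, Real.sq_sqrt (div_pos hκ₁0 hκ0).le]
      field_simp
    calc ‖F z‖ ≤ M * Real.exp (κ₀ * ‖z‖ ^ 2) := by simpa using hM z
      _ ≤ |M| * Real.exp (κ₁ * ‖z‖ ^ 2) := by gcongr; exact le_abs_self M
      _ = |M| * Real.exp (κ * t ^ 2) := by rw [hexponent]
  have hcoeff := norm_coeff_le_of_hasSum h (div_pos ht hq) hcircle n
  rw [le_div_iff₀ (by positivity), div_pow, mul_div_assoc', div_le_iff₀ (by positivity)] at hcoeff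
  exact hcoeff

lemma hasSum_backwardHeat (hF : IsSubBargmann F)
    (h : ∀ z, HasSum (fun n => a n * z ^ n) (F z)) (w : ℂ) :
    HasSum (fun n => a n * aeval w (hermite n)) (backwardHeat F w) := by
  obtain ⟨M, κ, q, hκ, hq0, hq1, hbound⟩ := hF.exists_norm_coeff_mul_pow_le h
  have hgeom (c : ℝ) : Summable fun n => c * q ^ n :=
    (summable_geometric_of_lt_one hq0 hq1).mul_left c
  have hdom := hasSum_integral_of_dominated_convergence (μ := gaussianReal 0 1)
    (F := fun n (x : ℝ) => a n * (w + x * Complex.I) ^ n)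
    (f := fun x : ℝ => F (w + x * Complex.I))
    (fun n x => M * Real.exp (κ * (|x| + (‖w‖ + 1)) ^ 2) * q ^ n)
    (fun n => by fun_prop) (fun n => ae_of_all _ fun x => ?_)
    (ae_of_all _ fun x => hgeom _) ?_ (ae_of_all _ fun x => h _)
  · simpa only [integral_const_mul, ← backwardHeat_pow, backwardHeat] using hdom
  · calc ‖a n * (w + x * Complex.I) ^ n‖ ≤ ‖a n‖ * (|x| + (‖w‖ + 1)) ^ n := by
          rw [norm_mul, norm_pow]
          gcongr
          linarith [norm_add_ofReal_mul_I_le w x]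
      _ ≤ M * Real.exp (κ * (|x| + (‖w‖ + 1)) ^ 2) * q ^ n := hbound n _ (by positivity)
  · simp only [tsum_mul_left]
    exact ((integrable_exp_mul_abs_add_sq hκ (‖w‖ + 1)).const_mul M).mul_const _

end PowerSeries

section StellarGrowth

variable {ψ : ℕ → ℂ}

lemma summable_norm_stellar_term_and_tsum_le (hψ : Summable fun n => ‖ψ n‖ ^ 2) (z : ℂ) :
    (Summable fun n => ‖ψ n * z ^ n / (√n.factorial : ℝ)‖) ∧
      ∑' n, ‖ψ n * z ^ n / (√n.factorial : ℝ)‖ ≤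
        √(∑' n, ‖ψ n‖ ^ 2) * Real.exp (‖z‖ ^ 2 / 2) := by
  have hexp : HasSum (fun n => (‖z‖ ^ n / √n.factorial) ^ 2) (Real.exp (‖z‖ ^ 2)) := by
    have := NormedSpace.expSeries_div_hasSum_exp (𝔸 := ℝ) (‖z‖ ^ 2)
    rw [← Real.exp_eq_exp_ℝ] at this
    refine this.congr_fun fun n => ?_
    rw [div_pow, Real.sq_sqrt (by positivity), pow_right_comm]
  have hterm (n : ℕ) : ‖ψ n * z ^ n / (√n.factorial : ℝ)‖ =
      ‖ψ n‖ * (‖z‖ ^ n / √n.factorial) := by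
    rw [norm_div, norm_mul, norm_pow, Complex.norm_of_nonneg (Real.sqrt_nonneg _), mul_div_assoc]
  have hsqrt : √(Real.exp (‖z‖ ^ 2)) = Real.exp (‖z‖ ^ 2 / 2) := (Real.exp_half _).symm
  have hcs := Real.summable_and_inner_le_Lp_mul_Lq_tsum_of_nonneg Real.HolderConjugate.two_two
    (f := fun n => ‖ψ n‖) (g := fun n => ‖z‖ ^ n / √n.factorial) (fun n => by positivity)
    (fun n => by positivity) (by exact_mod_cast hψ) (by exact_mod_cast hexp.summable)
  simp only [Real.rpow_two, hexp.tsum_eq, ← Real.sqrt_eq_rpow, hsqrt] at hcs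
  simpa only [hterm] using hcs

lemma hasSum_stellar (hψ : Summable fun n => ‖ψ n‖ ^ 2) (z : ℂ) :
    HasSum (fun n => ψ n / (√n.factorial : ℝ) * z ^ n) (stellar ψ z) := by
  simpa only [div_mul_eq_mul_div] using!
    (summable_norm_stellar_term_and_tsum_le hψ z).1.of_norm.hasSum

lemma norm_stellar_le (hψ : Summable fun n => ‖ψ n‖ ^ 2) (z : ℂ) :
    ‖stellar ψ z‖ ≤ √(∑' n, ‖ψ n‖ ^ 2) * Real.exp (‖z‖ ^ 2 / 2) :=
  have ⟨hs, hle⟩ := summable_norm_stellar_term_and_tsum_le hψ z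
  (norm_tsum_le_tsum_norm hs).trans hle

lemma isLittleO_exp_sq_cobounded {κ κ' : ℝ} (h : κ < κ') :
    (fun z : ℂ => Real.exp (κ * ‖z‖ ^ 2)) =o[Bornology.cobounded ℂ]
      fun z => Real.exp (κ' * ‖z‖ ^ 2) := by
  rw [Real.isLittleO_exp_comp_exp_comp]
  simp only [← sub_mul]
  exact ((tendsto_pow_atTop two_ne_zero).comp tendsto_norm_cobounded_atTop).const_mul_atTop
    (sub_pos.2 h)

lemma exists_stellar_eq_polynomial_add (hψ : Summable fun n => ‖ψ n‖ ^ 2) {ε : ℝ} (hε : 0 < ε) :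
    ∃ (p : ℂ[X]) (φ : ℕ → ℂ), (Summable fun n => ‖φ n‖ ^ 2) ∧ ∑' n, ‖φ n‖ ^ 2 < ε ∧
      ∀ z, stellar ψ z = p.eval z + stellar φ z := by
  obtain ⟨s, hs⟩ := ((tendsto_tsum_compl_atTop_zero fun n => ‖ψ n‖ ^ 2).eventually
    (gt_mem_nhds hε)).exists
  set φ := (sᶜ : Set ℕ).indicator ψ
  have hφ : (fun n => ‖φ n‖ ^ 2) = (sᶜ : Set ℕ).indicator fun n => ‖ψ n‖ ^ 2 := by
    ext n
    by_cases hn : n ∈ s <;> simp [φ, hn]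
  refine ⟨∑ n ∈ s, C (ψ n / (√n.factorial : ℝ)) * X ^ n, φ, ?_, ?_, fun z => ?_⟩
  · rw [hφ]
    exact hψ.indicator _
  · rw [hφ, ← tsum_subtype]
    exact hs
  · have hsplit := (hasSum_stellar hψ z).summable.sum_add_tsum_compl (s := s)
    rw [(hasSum_stellar hψ z).tsum_eq,
      tsum_subtype (s : Set ℕ)ᶜ fun n => ψ n / (√n.factorial : ℝ) * z ^ n] at hsplit
    rw [← hsplit, eval_finsetSum, stellar]
    congr 1
    · simp
    · congr 1 with n
      by_cases hn : n ∈ s <;> simp [φ, hn, div_mul_eq_mul_div]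

lemma isLittleO_stellar (hψ : Summable fun n => ‖ψ n‖ ^ 2) :
    stellar ψ =o[Bornology.cobounded ℂ] fun z => Real.exp (1 / 2 * ‖z‖ ^ 2) := by
  refine isLittleO_iff.2 fun ε hε => ?_
  obtain ⟨p, φ, hφ, hφε, hsplit⟩ :=
    exists_stellar_eq_polynomial_add hψ (by positivity : 0 < (ε / 2) ^ 2)
  have hp : (fun z => p.eval z) =o[Bornology.cobounded ℂ] fun z => Real.exp (1 / 2 * ‖z‖ ^ 2) :=
    ((isBigO_polynomial_exp_sq (by norm_num : (0 : ℝ) < 1 / 4) p).mono le_top).trans_isLittleO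
      (isLittleO_exp_sq_cobounded (by norm_num))
  filter_upwards [hp.def (half_pos hε)] with z hz
  rw [Real.norm_of_nonneg (Real.exp_pos _).le] at hz ⊢
  calc ‖stellar ψ z‖ ≤ ‖p.eval z‖ + ‖stellar φ z‖ := hsplit z ▸ norm_add_le _ _
    _ ≤ ε / 2 * Real.exp (1 / 2 * ‖z‖ ^ 2) + ε / 2 * Real.exp (1 / 2 * ‖z‖ ^ 2) := by
      refine add_le_add hz ((norm_stellar_le hφ z).trans ?_)
      rw [div_eq_inv_mul (‖z‖ ^ 2), ← one_div]
      gcongr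
      exact (Real.sqrt_le_sqrt hφε.le).trans_eq (Real.sqrt_sq (half_pos hε).le)
    _ = ε * Real.exp (1 / 2 * ‖z‖ ^ 2) := by ring

end StellarGrowth

section LeadingExponent

lemma eq_zero_of_tendsto_eval_zero {ι R : Type*} [NormedRing R] [NormMulClass R] {l : Filter ι}
    [l.NeBot] {f : ι → R} (hf : Tendsto (fun i => ‖f i‖) l atTop) {p : R[X]}
    (hp : Tendsto (fun i => p.eval (f i)) l (𝓝 0)) : p = 0 := by
  by_cases hd : 0 < p.degree
  · exact absurd hp.norm (not_tendsto_nhds_of_tendsto_atTop (p.tendsto_norm_atTop hd hf) _)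
  · rw [eq_C_of_degree_le_zero (not_lt.1 hd)] at hp ⊢
    simp only [eval_C, tendsto_const_nhds_iff] at hp
    rw [hp, C_0]

lemma exists_norm_eq_one_mul_sq_eq_norm (α β : ℂ) :
    ∃ u : ℂ, ‖u‖ = 1 ∧ α * u ^ 2 = ‖α‖ ∧ 0 ≤ (β * u).re := by
  set v := Complex.exp ((-α.arg / 2 : ℝ) * Complex.I)
  have hv : ‖v‖ = 1 := Complex.norm_exp_ofReal_mul_I _
  have hαv : α * v ^ 2 = ‖α‖ := by
    conv_lhs => rw [← Complex.norm_mul_exp_arg_mul_I α]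
    rw [← Complex.exp_nat_mul, mul_assoc, ← Complex.exp_add]
    have hphase : α.arg * Complex.I + (2 : ℕ) * ((-α.arg / 2 : ℝ) * Complex.I) = 0 := by
      push_cast
      ring
    rw [hphase, Complex.exp_zero, mul_one]
  rcases le_total 0 (β * v).re with h | h
  · exact ⟨v, hv, hαv, h⟩
  · exact ⟨-v, by simpa using hv, by simpa using hαv, by simpa using h⟩

lemma norm_lt_of_isLittleO {q : ℂ[X]} (hq : q ≠ 0) {α β γ : ℂ} {κ : ℝ}
    (h : (fun z => q.eval z * Complex.exp (α * z ^ 2 + β * z + γ)) =o[Bornology.cobounded ℂ]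
      fun z => Real.exp (κ * ‖z‖ ^ 2)) : ‖α‖ < κ := by
  by_contra! hκ
  obtain ⟨u, hu, hαu, hβu⟩ := exists_norm_eq_one_mul_sq_eq_norm α β
  have hnorm (t : ℝ) : ‖(t * u : ℂ)‖ = |t| := by simp [hu]
  have hray : Tendsto (fun t : ℝ => ‖(t * u : ℂ)‖) atTop atTop := by
    simpa only [hnorm] using tendsto_abs_atTop_atTop
  have hexp : (fun t : ℝ => Real.exp (κ * t ^ 2)) =O[atTop] fun t : ℝ =>
      Complex.exp (α * (t * u) ^ 2 + β * (t * u) + γ) := by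
    refine IsBigO.of_bound (Real.exp (-γ.re)) ?_
    filter_upwards [eventually_ge_atTop 0] with t ht
    have hexponent : α * (t * u) ^ 2 + β * (t * u) + γ =
        ((‖α‖ * t ^ 2 : ℝ) : ℂ) + t * (β * u) + γ := by
      push_cast
      linear_combination (t : ℂ) ^ 2 * hαu
    rw [Complex.norm_exp, hexponent, Complex.add_re, Complex.add_re, Complex.ofReal_re,
      Complex.re_ofReal_mul, Real.norm_eq_abs, Real.abs_exp, ← Real.exp_add, Real.exp_le_exp]
    nlinarith [mul_nonneg ht hβu, sq_nonneg t]
  have hlittle := h.comp_tendsto (tendsto_norm_atTop_iff_cobounded.1 hray)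
  simp only [Function.comp_def, hnorm, sq_abs] at hlittle
  have hquot := (hlittle.trans_isBigO hexp).mul_isBigO (isBigO_refl (fun t : ℝ =>
    (Complex.exp (α * (t * u) ^ 2 + β * (t * u) + γ))⁻¹) atTop)
  simp only [mul_assoc _ (Complex.exp _), mul_inv_cancel₀ (Complex.exp_ne_zero _), mul_one] at hquot
  exact hq (eq_zero_of_tendsto_eval_zero hray ((isLittleO_one_iff ℂ).1 hquot))

end LeadingExponent

section Zeros

lemma vanishingOrder_eq_of_analyticOrderAt_eq {f : ℂ → ℂ} {z : ℂ} {n : ℕ} (hf : AnalyticAt ℂ f z)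
    (h : analyticOrderAt f z = n) : vanishingOrder f z = n := by
  obtain ⟨hlt, hne⟩ := (analyticOrderAt_eq_nat_iff_iteratedDeriv_eq_zero hf).1 h
  exact IsLeast.csInf_eq ⟨hne, fun m hm => not_lt.1 fun hmn => hm (hlt m hmn)⟩

lemma analyticOrderAt_polynomial_mul {𝕜 : Type*} [NontriviallyNormedField 𝕜] {p : 𝕜[X]}
    (hp : p ≠ 0) {g : 𝕜 → 𝕜} {z : 𝕜} (hg : AnalyticAt 𝕜 g z) (hgz : g z ≠ 0) :
    analyticOrderAt (fun x => p.eval x * g x) z = p.rootMultiplicity z := by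
  obtain ⟨q, hpq, hq⟩ := exists_eq_pow_rootMultiplicity_mul_and_not_dvd p hp z
  rw [dvd_iff_isRoot] at hq
  have hpa := AnalyticOnNhd.eval_polynomial (𝕜 := 𝕜) p z trivial
  have hqa := AnalyticOnNhd.eval_polynomial (𝕜 := 𝕜) q z trivial
  rw [(hpa.fun_mul hg).analyticOrderAt_eq_natCast]
  refine ⟨fun x => q.eval x * g x, hqa.fun_mul hg, mul_ne_zero hq hgz,
    Eventually.of_forall fun x => ?_⟩
  conv_lhs => rw [hpq]
  simp [mul_assoc]

lemma exists_finite_sum_vanishingOrder_eq_natDegree {f g : ℂ → ℂ} {p : ℂ[X]} (hp : p ≠ 0)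
    (hg : Differentiable ℂ g) (hg0 : ∀ z, g z ≠ 0) (hf : ∀ z, f z = p.eval z * g z) :
    ∃ hfin : {z | f z = 0}.Finite, ∑ z ∈ hfin.toFinset, vanishingOrder f z = p.natDegree := by
  have hzeros : {z | f z = 0} = p.roots.toFinset := by
    ext z
    simp [hf, hp, hg0]
  have hfin : {z | f z = 0}.Finite := hzeros ▸ Finset.finite_toSet _
  have horder (z : ℂ) : vanishingOrder f z = p.roots.count z := by
    have hga := hg.analyticAt z
    rw [funext hf, count_roots]
    exact vanishingOrder_eq_of_analyticOrderAt_eq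
      ((p.differentiable.fun_mul hg).analyticAt z) (analyticOrderAt_polynomial_mul hp hga (hg0 z))
  refine ⟨hfin, ?_⟩
  have htoFinset : hfin.toFinset = p.roots.toFinset := by
    rw [← Finset.coe_inj, hfin.coe_toFinset, hzeros]
  simp only [horder, htoFinset]
  rw [Multiset.toFinset_sum_count_eq, IsAlgClosed.card_roots_eq_natDegree]

end Zeros

section Wavefunction

variable {ψ : ℕ → ℂ}

lemma wfTerm_eq_coeff_mul_aeval_hermite (ψ : ℕ → ℂ) (z : ℂ) (n : ℕ) :
    wfTerm ψ z n = ψ n / (√n.factorial : ℝ) * aeval ((√2 : ℝ) * z) (hermite n) := by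
  have hsqrt : √(2 ^ n * n.factorial) = √2 ^ n * √n.factorial := by
    rw [Real.sqrt_mul (by positivity), Real.sqrt_eq_rpow, Real.sqrt_eq_rpow (2 : ℝ),
      Real.rpow_pow_comm zero_le_two]
  have h2 : ((√2 : ℝ) : ℂ) ≠ 0 := by simp
  rw [wfTerm, physHermite, hsqrt]
  push_cast
  field_simp

lemma hasSum_wfTerm (hψ : Summable fun n => ‖ψ n‖ ^ 2) (hF : IsSubBargmann (stellar ψ)) (z : ℂ) :
    HasSum (wfTerm ψ z) (backwardHeat (stellar ψ) ((√2 : ℝ) * z)) := by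
  simpa only [← wfTerm_eq_coeff_mul_aeval_hermite] using
    hasSum_backwardHeat hF (hasSum_stellar hψ) ((√2 : ℝ) * z)

lemma re_one_sub_div_one_add_pos {ζ : ℂ} (hζ : ‖ζ‖ < 1) : 0 < ((1 - ζ) / (1 + ζ)).re := by
  have hsq : Complex.normSq ζ < 1 := by
    rw [Complex.normSq_eq_norm_sq]
    exact pow_lt_one₀ (norm_nonneg ζ) hζ two_ne_zero
  rw [Complex.div_re, ← add_div]
  refine div_pos ?_ (Complex.normSq_pos.2 (one_add_ne_zero_of_norm_lt_one hζ))
  rw [Complex.normSq_apply] at hsq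
  simp only [Complex.sub_re, Complex.add_re, Complex.one_re, Complex.sub_im, Complex.add_im,
    Complex.one_im]
  linarith

lemma exists_extWf_eq_polynomial_mul_cexp {Q : ℂ[X]} {α β γ : ℂ} (hα : ‖α‖ < 1 / 2)
    (hsum : ∀ z, HasSum (wfTerm ψ z) (backwardHeat (stellar ψ) ((√2 : ℝ) * z)))
    (hF : stellar ψ = fun z => Q.eval z * Complex.exp (α * z ^ 2 + β * z + γ)) :
    ∃ P : ℂ[X], P.degree = Q.degree ∧ ∃ a b c : ℂ, 0 < a.re ∧
      ∀ z, extWf ψ z = P.eval z * Complex.exp (-a * z ^ 2 + b * z + c) := by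
  obtain ⟨p, hp, γ', hpw⟩ := exists_backwardHeat_polynomial_mul_cexp_quadratic hα β γ Q
  have hne := one_add_two_mul_ne_zero hα
  have hdegree : (C ((√2 : ℝ) : ℂ) * X).degree = 1 := degree_C_mul_X (by simp)
  have hsq : ((√2 : ℝ) : ℂ) ^ 2 = 2 := by exact_mod_cast Real.sq_sqrt zero_le_two
  have hconst : ((Real.pi ^ ((1 : ℝ) / 4) : ℝ) : ℂ)⁻¹ ≠ 0 :=
    inv_ne_zero (by exact_mod_cast (Real.rpow_pos_of_pos Real.pi_pos _).ne')
  refine ⟨C ((Real.pi ^ ((1 : ℝ) / 4) : ℝ) : ℂ)⁻¹ * p.comp (C ((√2 : ℝ) : ℂ) * X), ?_,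
    (1 - 2 * α) / (1 + 2 * α) / 2, β / (1 + 2 * α) * (√2 : ℝ), γ', ?_, fun z => ?_⟩
  · rw [degree_C_mul hconst, degree_comp (hdegree ▸ one_pos), hdegree, mul_one, hp]
  · rw [Complex.div_ofNat_re]
    exact half_pos (re_one_sub_div_one_add_pos (norm_two_mul_lt_one hα))
  · have hexponent : -z ^ 2 / 2 + (α / (1 + 2 * α) * ((√2 : ℝ) * z) ^ 2
        + β / (1 + 2 * α) * ((√2 : ℝ) * z) + γ') =
        -((1 - 2 * α) / (1 + 2 * α) / 2) * z ^ 2 + β / (1 + 2 * α) * (√2 : ℝ) * z + γ' := by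
      rw [mul_pow, hsq]
      field_simp
      ring
    rw [extWf, (hsum z).tsum_eq, hF, hpw, ← hexponent, Complex.exp_add (-z ^ 2 / 2)]
    simp only [eval_mul, eval_C, eval_comp, eval_X]
    ring

end Wavefunction

end StellarRank

open StellarRank in
/-- **Finite stellar rank and wavefunction zeros (direct part).** If a normalizable state
has stellar rank `r`, i.e. its stellar function is a polynomial of degree exactly `r`
times a Gaussian, then the Hermite series of its wavefunction converges absolutely
everywhere, the extended wavefunction is a polynomial of degree exactly `r`
times a Gaussian `e^(-a z² + b z + c)` with `Re(a) > 0`, and in particular it has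
exactly `r` complex zeros counted with multiplicity. -/
theorem extWf_of_finite_stellar_rank (ψ : ℕ → ℂ) (r : ℕ)
    (hsum : Summable fun n => ‖ψ n‖ ^ 2)
    (hpos : 0 < ∑' n, ‖ψ n‖ ^ 2)
    (Q : Polynomial ℂ) (hQ : Q.degree = (r : ℕ)) (α β γ : ℂ)
    (hF : ∀ z : ℂ, stellar ψ z = Q.eval z * Complex.exp (α * z ^ 2 + β * z + γ)) :
    (∀ z : ℂ, Summable fun n => ‖wfTerm ψ z n‖) ∧
    (∃ P : Polynomial ℂ, P.degree = (r : ℕ) ∧ ∃ a b c : ℂ, 0 < a.re ∧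
      ∀ z : ℂ, extWf ψ z = P.eval z * Complex.exp (-a * z ^ 2 + b * z + c)) ∧
    ∃ hfin : {z : ℂ | extWf ψ z = 0}.Finite,
      ∑ z ∈ hfin.toFinset, vanishingOrder (extWf ψ) z = r := by
  have hF' : stellar ψ = fun z => Q.eval z * Complex.exp (α * z ^ 2 + β * z + γ) := funext hF
  have hQ0 : Q ≠ 0 := by
    rintro rfl
    simp at hQ
  have hα : ‖α‖ < 1 / 2 := norm_lt_of_isLittleO hQ0 (hF' ▸ isLittleO_stellar hsum)
  have hwf := hasSum_wfTerm hsum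
    (hF' ▸ (isSubBargmann_cexp_quadratic hα β γ).mul_polynomial Q : IsSubBargmann (stellar ψ))
  obtain ⟨P, hP, a, b, c, ha, hψ⟩ := exists_extWf_eq_polynomial_mul_cexp hα hwf hF'
  rw [hQ] at hP
  have hP0 : P ≠ 0 := by
    rintro rfl
    simp at hP
  refine ⟨fun z => (hwf z).summable.norm, ⟨P, hP, a, b, c, ha, hψ⟩, ?_⟩
  rw [← Polynomial.natDegree_eq_of_degree_eq_some hP]
  exact exists_finite_sum_vanishingOrder_eq_natDegree hP0 (by fun_prop)
    (fun z => Complex.exp_ne_zero _) hψ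
end

section
/- (Energy bound for finite stellar rank.) Let (ψ_n)_{n∈ℕ} be a sequence of complex numbers with 0 < Σ_{n≥0} |ψ_n|² < ∞ whose stellar function F(z) = Σ_{n≥0} ψ_n z^n/√(n!) satisfies F(z) = Q(z) e^{α z² + β z + γ} for all z ∈ ℂ, for some complex polynomial Q and some α, β, γ ∈ ℂ (i.e. the state has finite stellar rank). Then there exists a real s > 1 such that Σ_{n≥0} s^n |ψ_n|² < ∞. -/
open scoped BigOperators

open Filter Topology Bornology

/-!
Truncating `ψ` and applying the Cauchy–Schwarz inequality to the tail shows that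
`e^{-|z|²/2} F(z) → 0` as `|z| → ∞`. On a ray along which `α z² = ‖α‖ |z|²`, this
forces `‖α‖ < 1/2` unless `Q = 0`, so `|F(z)| ≤ C e^{a|z|²}` for some `a < 1/2`.

Cauchy's estimate on the circle `|z|² = x` then reads `|ψ_n|² x^n / n! ≤ C² e^{2ax}`, and
integrating against `e^{-tx}` with `2a < t < 1`, instead of optimizing over `x`, replaces
Stirling's formula: it gives `|ψ_n|² ≤ C² t^{n+1} / (t - 2a)`, a geometric decay that any `s` with
`s t < 1` tolerates.
-/

lemma hasFPowerSeriesOnBall_top_of_forall_hasSum {𝕜 E : Type*} [NontriviallyNormedField 𝕜]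
    [NormedAddCommGroup E] [NormedSpace 𝕜 E] {p : FormalMultilinearSeries 𝕜 𝕜 E} {f : 𝕜 → E}
    (hf : ∀ z, HasSum (fun n => z ^ n • p.coeff n) (f z)) : HasFPowerSeriesOnBall f p 0 ⊤ where
  r_le := by
    refine (p.radius_eq_top_of_forall_nnreal_isBigO fun r => ?_).ge
    obtain ⟨z, hz⟩ := NormedField.exists_lt_norm 𝕜 r
    refine Asymptotics.IsBigO.trans (.of_norm_le fun n => ?_)
      ((hf z).summable.tendsto_atTop_zero.isBigO_one ℝ).norm_left
    rw [norm_mul, norm_norm, FormalMultilinearSeries.norm_apply_eq_norm_coef, norm_smul, mul_comm,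
      norm_pow, norm_pow, Real.norm_of_nonneg r.coe_nonneg]
    gcongr
  r_pos := ENNReal.zero_lt_top
  hasSum {z} _ := by
    simpa only [FormalMultilinearSeries.apply_eq_pow_smul_coeff, zero_add] using hf z

lemma norm_coeff_le_div_pow_of_forall_mem_sphere_norm_le {E : Type*} [NormedAddCommGroup E]
    [NormedSpace ℂ E] [CompleteSpace E] {p : FormalMultilinearSeries ℂ ℂ E} {f : ℂ → E} {c : ℂ}
    {r : ENNReal} {R M : ℝ} (hf : HasFPowerSeriesOnBall f p c r) (hR : 0 < R)
    (hRr : ENNReal.ofReal R < r) (hM : ∀ z ∈ Metric.sphere c R, ‖f z‖ ≤ M) (n : ℕ) :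
    ‖p.coeff n‖ ≤ M / R ^ n := by
  have hdiff : DiffContOnCl ℂ f (Metric.ball c R) := by
    refine (hf.differentiableOn.mono fun z hz => ?_).diffContOnCl_ball subset_rfl
    rw [← Metric.closedEBall_ofReal hR.le] at hz
    exact (Metric.mem_closedEBall.1 hz).trans_lt hRr
  have hcoeff : n.factorial • p.coeff n = iteratedDeriv n f c := by
    simpa only [iteratedDeriv_eq_iteratedFDeriv] using! hf.factorial_smul 1 n
  have hcauchy := Complex.norm_iteratedDeriv_le_of_forall_mem_sphere_norm_le n hR hdiff hM
  rw [← hcoeff, ← Nat.cast_smul_eq_nsmul ℝ, norm_smul, Real.norm_natCast, mul_div_assoc] at hcauchy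
  exact le_of_mul_le_mul_left hcauchy (by positivity)

lemma mul_factorial_le_of_forall_mul_pow_le_mul_exp {A B c t : ℝ} {n : ℕ} (ht : 0 < t)
    (hct : c < t) (h : ∀ x > 0, A * x ^ n ≤ B * Real.exp (c * x)) :
    A * n.factorial ≤ B * (t ^ (n + 1) / (t - c)) := by
  have hgamma : ∫ x in Set.Ioi (0 : ℝ), x ^ n * Real.exp (-(t * x)) =
      n.factorial / t ^ (n + 1) := by
    have := Real.integral_rpow_mul_exp_neg_mul_Ioi (a := n + 1) (by positivity) ht
    rw [Real.Gamma_nat_eq_factorial] at this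
    simp only [add_sub_cancel_right, Real.rpow_natCast] at this
    norm_cast at this
    simpa only [one_div, inv_pow, inv_mul_eq_div] using this
  have hgamma_int : MeasureTheory.IntegrableOn (fun x => x ^ n * Real.exp (-(t * x))) (Set.Ioi 0) :=
    .of_integral_ne_zero (by rw [hgamma]; positivity)
  have hexp : ∫ x in Set.Ioi (0 : ℝ), Real.exp ((c - t) * x) = 1 / (t - c) := by
    rw [integral_exp_mul_Ioi (sub_neg.2 hct), mul_zero, Real.exp_zero, neg_div, ← div_neg, neg_sub]
  have hint : A * (n.factorial / t ^ (n + 1)) ≤ B * (1 / (t - c)) := by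
    rw [← hgamma, ← hexp, ← MeasureTheory.integral_const_mul, ← MeasureTheory.integral_const_mul]
    refine MeasureTheory.setIntegral_mono_on (hgamma_int.const_mul A)
      ((integrableOn_exp_mul_Ioi (sub_neg.2 hct) 0).const_mul B) measurableSet_Ioi fun x hx => ?_
    calc A * (x ^ n * Real.exp (-(t * x))) = A * x ^ n * Real.exp (-(t * x)) := by ring
      _ ≤ B * Real.exp (c * x) * Real.exp (-(t * x)) :=
        mul_le_mul_of_nonneg_right (h x hx) (Real.exp_nonneg _)
      _ = B * Real.exp ((c - t) * x) := by rw [mul_assoc, ← Real.exp_add]; ring_nf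
  calc A * n.factorial = A * (n.factorial / t ^ (n + 1)) * t ^ (n + 1) := by field_simp
    _ ≤ B * (1 / (t - c)) * t ^ (n + 1) := by gcongr
    _ = B * (t ^ (n + 1) / (t - c)) := by ring

lemma summable_mul_and_tsum_mul_le_sqrt_mul_sqrt {ι : Type*} {f g : ι → ℝ} (hf : ∀ i, 0 ≤ f i)
    (hg : ∀ i, 0 ≤ g i) (hf_sum : Summable fun i => f i ^ 2) (hg_sum : Summable fun i => g i ^ 2) :
    (Summable fun i => f i * g i) ∧
      ∑' i, f i * g i ≤ √(∑' i, f i ^ 2) * √(∑' i, g i ^ 2) := by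
  simpa [Real.sqrt_eq_rpow] using Real.summable_and_inner_le_Lp_mul_Lq_tsum_of_nonneg
    Real.HolderConjugate.two_two hf hg (by simpa using hf_sum) (by simpa using hg_sum)

lemma tendsto_exp_neg_mul_norm_sq_smul_pow_cobounded {𝕜 : Type*} [NormedDivisionRing 𝕜]
    [NormedAlgebra ℝ 𝕜] {b : ℝ} (hb : 0 < b) (n : ℕ) :
    Tendsto (fun z : 𝕜 => Real.exp (-b * ‖z‖ ^ 2) • z ^ n) (cobounded 𝕜) (𝓝 0) := by
  rw [tendsto_zero_iff_norm_tendsto_zero]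
  refine ((tendsto_rpow_abs_mul_exp_neg_mul_sq_cocompact hb n).comp
    (tendsto_norm_cobounded_atTop.mono_right atTop_le_cocompact)).congr fun z => ?_
  rw [Function.comp_apply, abs_norm, Real.rpow_natCast, norm_smul,
    Real.norm_of_nonneg (Real.exp_nonneg _), norm_pow, mul_comm]

lemma exists_forall_norm_eval_le_mul_exp_norm {𝕜 : Type*} [NormedField 𝕜] (P : Polynomial 𝕜) :
    ∃ C, 0 ≤ C ∧ ∀ z, ‖P.eval z‖ ≤ C * Real.exp ‖z‖ := by
  refine ⟨∑ i ∈ Finset.range (P.natDegree + 1), ‖P.coeff i‖ * i.factorial, by positivity,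
    fun z => ?_⟩
  rw [Polynomial.eval_eq_sum_range, Finset.sum_mul]
  refine norm_sum_le_of_le _ fun i _ => ?_
  rw [norm_mul, norm_pow, mul_assoc]
  gcongr
  exact (div_le_iff₀' (by positivity)).1 (Real.pow_div_factorial_le_exp _ (norm_nonneg z) i)

lemma eq_zero_of_tendsto_eval_zero {𝕜 ι : Type*} [NormedField 𝕜] {P : Polynomial 𝕜}
    {l : Filter ι} [l.NeBot] {z : ι → 𝕜} (hz : Tendsto z l (cobounded 𝕜))
    (hP : Tendsto (fun i => P.eval (z i)) l (𝓝 0)) : P = 0 := by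
  rcases le_or_gt P.degree 0 with hdeg | hdeg
  · rw [Polynomial.eq_C_of_degree_le_zero hdeg] at hP ⊢
    simp only [Polynomial.eval_C, tendsto_const_nhds_iff] at hP
    rw [hP, Polynomial.C_0]
  · exact (not_tendsto_nhds_of_tendsto_atTop
      (P.tendsto_norm_atTop hdeg (tendsto_norm_atTop_iff_cobounded.2 hz)) _ hP.norm).elim

lemma hasSum_pow_div_sqrt_factorial_sq (x : ℝ) :
    HasSum (fun n : ℕ => (x ^ n / √n.factorial) ^ 2) (Real.exp (x ^ 2)) := by
  have h := NormedSpace.expSeries_div_hasSum_exp (𝔸 := ℝ) (x ^ 2)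
  rw [← Real.exp_eq_exp_ℝ] at h
  refine h.congr_fun fun n => ?_
  rw [div_pow, Real.sq_sqrt (by positivity), pow_right_comm]

lemma norm_mul_pow_div_sqrt_factorial (c z : ℂ) (n : ℕ) :
    ‖c * z ^ n / (√n.factorial : ℝ)‖ = ‖c‖ * (‖z‖ ^ n / √n.factorial) := by
  rw [norm_div, norm_mul, norm_pow, Complex.norm_of_nonneg (Real.sqrt_nonneg _), mul_div_assoc]

section Stellar

variable {ψ : ℕ → ℂ}

lemma summable_stellar (hψ : Summable fun n => ‖ψ n‖ ^ 2) (z : ℂ) :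
    Summable fun n => ψ n * z ^ n / (√n.factorial : ℝ) := by
  refine .of_norm ?_
  simpa only [norm_mul_pow_div_sqrt_factorial] using (summable_mul_and_tsum_mul_le_sqrt_mul_sqrt
    (fun n => norm_nonneg (ψ n)) (fun n => by positivity) hψ
    (hasSum_pow_div_sqrt_factorial_sq ‖z‖).summable).1

lemma norm_stellar_sub_sum_range_le (hψ : Summable fun n => ‖ψ n‖ ^ 2) (z : ℂ) (N : ℕ) :
    ‖stellar ψ z - ∑ n ∈ Finset.range N, ψ n * z ^ n / (√n.factorial : ℝ)‖ ≤
      √(∑' n, ‖ψ (n + N)‖ ^ 2) * Real.exp (1 / 2 * ‖z‖ ^ 2) := by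
  have hweight := hasSum_pow_div_sqrt_factorial_sq ‖z‖
  obtain ⟨hsum, hle⟩ := summable_mul_and_tsum_mul_le_sqrt_mul_sqrt
    (fun n => norm_nonneg (ψ (n + N))) (fun n => by positivity)
    ((summable_nat_add_iff N).2 hψ) ((summable_nat_add_iff N).2 hweight.summable)
  have htail : ∑' n, (‖z‖ ^ (n + N) / √(n + N).factorial) ^ 2 ≤ Real.exp (‖z‖ ^ 2) := by
    rw [← hweight.tsum_eq, ← hweight.summable.sum_add_tsum_nat_add N]
    exact le_add_of_nonneg_left (by positivity)
  calc ‖stellar ψ z - ∑ n ∈ Finset.range N, ψ n * z ^ n / (√n.factorial : ℝ)‖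
      = ‖∑' n, ψ (n + N) * z ^ (n + N) / (√(n + N).factorial : ℝ)‖ := by
        rw [stellar, ← (summable_stellar hψ z).sum_add_tsum_nat_add N, add_sub_cancel_left]
    _ ≤ ∑' n, ‖ψ (n + N)‖ * (‖z‖ ^ (n + N) / √(n + N).factorial) :=
        tsum_of_norm_bounded hsum.hasSum fun n =>
          (norm_mul_pow_div_sqrt_factorial (ψ (n + N)) z (n + N)).le
    _ ≤ √(∑' n, ‖ψ (n + N)‖ ^ 2) * √(Real.exp (‖z‖ ^ 2)) := hle.trans (by gcongr)
    _ = √(∑' n, ‖ψ (n + N)‖ ^ 2) * Real.exp (1 / 2 * ‖z‖ ^ 2) := by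
        rw [← Real.exp_half, one_div_mul_eq_div]

lemma tendsto_exp_neg_half_norm_sq_smul_stellar_cobounded (hψ : Summable fun n => ‖ψ n‖ ^ 2) :
    Tendsto (fun z => Real.exp (-(1 / 2) * ‖z‖ ^ 2) • stellar ψ z) (cobounded ℂ) (𝓝 0) := by
  have hpartial (N : ℕ) : Tendsto (fun z : ℂ => Real.exp (-(1 / 2) * ‖z‖ ^ 2) •
      ∑ n ∈ Finset.range N, ψ n * z ^ n / (√n.factorial : ℝ)) (cobounded ℂ) (𝓝 0) := by
    simp only [Finset.smul_sum, mul_div_right_comm, ← mul_smul_comm]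
    simpa only [mul_zero, Finset.sum_const_zero] using tendsto_finsetSum (Finset.range N) fun n _ =>
      (tendsto_exp_neg_mul_norm_sq_smul_pow_cobounded one_half_pos n).const_mul
        (ψ n / (√n.factorial : ℝ))
  have htail : Tendsto (fun N => √(∑' n, ‖ψ (n + N)‖ ^ 2)) atTop (𝓝 0) := by
    simpa only [Real.sqrt_zero] using (tendsto_sum_nat_add fun n => ‖ψ n‖ ^ 2).sqrt
  have hunif : TendstoUniformly (fun (N : ℕ) z => Real.exp (-(1 / 2) * ‖z‖ ^ 2) •
      ∑ n ∈ Finset.range N, ψ n * z ^ n / (√n.factorial : ℝ))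
      (fun z => Real.exp (-(1 / 2) * ‖z‖ ^ 2) • stellar ψ z) atTop := by
    refine Metric.tendstoUniformly_iff.2 fun ε hε => ?_
    filter_upwards [htail.eventually_lt_const hε] with N hN z
    refine lt_of_le_of_lt ?_ hN
    rw [dist_eq_norm, ← smul_sub, norm_smul, Real.norm_of_nonneg (Real.exp_nonneg _), neg_mul,
      Real.exp_neg, inv_mul_le_iff₀ (Real.exp_pos _), mul_comm (Real.exp _)]
    exact norm_stellar_sub_sum_range_le hψ z N
  exact hunif.tendsto_of_eventually_tendsto (.of_forall hpartial) tendsto_const_nhds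

lemma norm_sq_mul_pow_le_of_norm_stellar_le_mul_exp {a C x : ℝ}
    (hψ : ∀ z : ℂ, Summable fun n => ψ n * z ^ n / (√n.factorial : ℝ))
    (hC : ∀ z, ‖stellar ψ z‖ ≤ C * Real.exp (a * ‖z‖ ^ 2)) (hx : 0 < x) (n : ℕ) :
    ‖ψ n‖ ^ 2 * x ^ n ≤ n.factorial * C ^ 2 * Real.exp (2 * a * x) := by
  set p := FormalMultilinearSeries.ofScalars ℂ fun n => ψ n / (√n.factorial : ℝ) with hp
  have hseries : HasFPowerSeriesOnBall (stellar ψ) p 0 ⊤ :=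
    hasFPowerSeriesOnBall_top_of_forall_hasSum fun z => (hψ z).hasSum.congr_fun fun n => by
      rw [hp, FormalMultilinearSeries.coeff_ofScalars, smul_eq_mul]; ring
  have hcauchy := norm_coeff_le_div_pow_of_forall_mem_sphere_norm_le (M := C * Real.exp (a * x))
    hseries (Real.sqrt_pos.2 hx) ENNReal.ofReal_lt_top (fun z hz => by
      simpa [mem_sphere_zero_iff_norm.1 hz, Real.sq_sqrt hx.le] using hC z) n
  rw [hp, FormalMultilinearSeries.coeff_ofScalars, norm_div,
    Complex.norm_of_nonneg (Real.sqrt_nonneg _),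
    div_le_div_iff₀ (by positivity) (by positivity)] at hcauchy
  calc ‖ψ n‖ ^ 2 * x ^ n = (‖ψ n‖ * √x ^ n) ^ 2 := by
        rw [mul_pow, pow_right_comm, Real.sq_sqrt hx.le]
    _ ≤ (C * Real.exp (a * x) * √n.factorial) ^ 2 := by gcongr
    _ = n.factorial * C ^ 2 * Real.exp (2 * a * x) := by
        rw [mul_pow, mul_pow, Real.sq_sqrt (by positivity), ← Real.exp_nat_mul]
        push_cast; ring_nf

lemma norm_sq_le_of_norm_stellar_le_mul_exp {a C t : ℝ}
    (hψ : ∀ z : ℂ, Summable fun n => ψ n * z ^ n / (√n.factorial : ℝ))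
    (hC : ∀ z, ‖stellar ψ z‖ ≤ C * Real.exp (a * ‖z‖ ^ 2)) (ht : 0 < t) (hat : 2 * a < t) (n : ℕ) :
    ‖ψ n‖ ^ 2 ≤ C ^ 2 * (t ^ (n + 1) / (t - 2 * a)) := by
  have h := mul_factorial_le_of_forall_mul_pow_le_mul_exp ht hat fun _ hx =>
    norm_sq_mul_pow_le_of_norm_stellar_le_mul_exp hψ hC hx n
  rw [mul_comm, mul_assoc] at h
  exact le_of_mul_le_mul_left h (by positivity)

lemma summable_pow_mul_norm_sq_of_norm_stellar_le_mul_exp {a C s : ℝ}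
    (hψ : ∀ z : ℂ, Summable fun n => ψ n * z ^ n / (√n.factorial : ℝ))
    (hC : ∀ z, ‖stellar ψ z‖ ≤ C * Real.exp (a * ‖z‖ ^ 2)) (hs : 0 < s) (has : 2 * a * s < 1) :
    Summable fun n => s ^ n * ‖ψ n‖ ^ 2 := by
  obtain ⟨t, hmax, hts⟩ : ∃ t, max 0 (2 * a) < t ∧ t < 1 / s :=
    exists_between (max_lt (one_div_pos.2 hs) ((lt_div_iff₀ hs).2 has))
  obtain ⟨ht, hat⟩ := max_lt_iff.1 hmax
  have hst : s * t < 1 := (lt_div_iff₀' hs).1 hts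
  have hgeom : Summable fun n => C ^ 2 * (t / (t - 2 * a)) * (s * t) ^ n :=
    (summable_geometric_of_lt_one (by positivity) hst).mul_left _
  refine hgeom.of_nonneg_of_le (fun n => by positivity) fun n => ?_
  calc s ^ n * ‖ψ n‖ ^ 2 ≤ s ^ n * (C ^ 2 * (t ^ (n + 1) / (t - 2 * a))) := by
        gcongr
        exact norm_sq_le_of_norm_stellar_le_mul_exp hψ hC ht hat n
    _ = C ^ 2 * (t / (t - 2 * a)) * (s * t) ^ n := by rw [mul_pow]; ring

end Stellar

lemma exists_norm_eq_one_mul_sq_eq_norm (α β : ℂ) :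
    ∃ u : ℂ, ‖u‖ = 1 ∧ α * u ^ 2 = ‖α‖ ∧ 0 ≤ (β * u).re := by
  -- A square root of the inverse phase of `α`; its sign is free and settles the linear term.
  obtain ⟨c, hc, hαc⟩ := RCLike.exists_norm_eq_mul_self α
  obtain ⟨u, rfl⟩ := IsAlgClosed.exists_pow_nat_eq c two_pos
  have hu : ‖u‖ = 1 := by
    rwa [norm_pow, pow_eq_one_iff_of_nonneg (norm_nonneg u) two_ne_zero] at hc
  rw [mul_comm] at hαc
  rcases le_total 0 (β * u).re with hβ | hβ
  · exact ⟨u, hu, hαc.symm, hβ⟩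
  · exact ⟨-u, by rwa [norm_neg], by rw [neg_sq]; exact hαc.symm, by simpa using hβ⟩

lemma norm_lt_of_tendsto_exp_neg_mul_norm_sq_smul {Q : Polynomial ℂ} (hQ : Q ≠ 0) {α β γ : ℂ}
    {b : ℝ} (h : Tendsto (fun z => Real.exp (-b * ‖z‖ ^ 2) •
      (Q.eval z * Complex.exp (α * z ^ 2 + β * z + γ))) (cobounded ℂ) (𝓝 0)) : ‖α‖ < b := by
  by_contra! hα
  obtain ⟨u, hu, hαu, hβu⟩ := exists_norm_eq_one_mul_sq_eq_norm α β
  have hray : Tendsto (fun t : ℝ => t * u) atTop (cobounded ℂ) := by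
    rw [← tendsto_norm_atTop_iff_cobounded]
    simpa [hu] using tendsto_abs_atTop_atTop
  have hlower (t : ℝ) (ht : 0 ≤ t) : ‖Q.eval (t * u)‖ * Real.exp γ.re ≤
      ‖Real.exp (-b * ‖t * u‖ ^ 2) •
        (Q.eval (t * u) * Complex.exp (α * (t * u) ^ 2 + β * (t * u) + γ))‖ := by
    have hexponent : (α * (t * u) ^ 2 + β * (t * u) + γ).re =
        ‖α‖ * t ^ 2 + t * (β * u).re + γ.re := by
      rw [show α * (t * u) ^ 2 + β * (t * u) + γ = (‖α‖ * t ^ 2 : ℝ) + t * (β * u) + γ by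
        push_cast; rw [← hαu]; ring]
      simp only [Complex.add_re, Complex.ofReal_re, Complex.re_ofReal_mul]
    have hnorm : ‖t * u‖ = t := by rw [norm_mul, hu, mul_one, Complex.norm_of_nonneg ht]
    rw [hnorm, norm_smul, norm_mul, Real.norm_of_nonneg (Real.exp_nonneg _), Complex.norm_exp,
      hexponent, mul_left_comm, ← Real.exp_add]
    gcongr
    nlinarith [mul_nonneg ht hβu, mul_le_mul_of_nonneg_right hα (sq_nonneg t)]
  have hdecay : Tendsto (fun t : ℝ => ‖Q.eval (t * u)‖ * Real.exp γ.re) atTop (𝓝 0) :=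
    squeeze_zero' (.of_forall fun t => by positivity) ((eventually_ge_atTop 0).mono hlower)
      (tendsto_zero_iff_norm_tendsto_zero.1 (h.comp hray))
  refine hQ (eq_zero_of_tendsto_eval_zero hray (tendsto_zero_iff_norm_tendsto_zero.2 ?_))
  simpa [mul_assoc, ← Real.exp_neg, ← Real.exp_add] using hdecay.mul_const (Real.exp (-γ.re))

lemma exists_forall_norm_eval_mul_cexp_le (Q : Polynomial ℂ) {α : ℂ} (β γ : ℂ) {a : ℝ}
    (hα : ‖α‖ < a) : ∃ C, ∀ z,
      ‖Q.eval z * Complex.exp (α * z ^ 2 + β * z + γ)‖ ≤ C * Real.exp (a * ‖z‖ ^ 2) := by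
  obtain ⟨K, hK, hQ⟩ := exists_forall_norm_eval_le_mul_exp_norm Q
  have hδ : 0 < a - ‖α‖ := sub_pos.2 hα
  have young (x : ℝ) : (1 + ‖β‖) * x ≤ (a - ‖α‖) * x ^ 2 + (1 + ‖β‖) ^ 2 / (4 * (a - ‖α‖)) := by
    rw [← sub_nonneg]
    calc 0 ≤ (2 * (a - ‖α‖) * x - (1 + ‖β‖)) ^ 2 / (4 * (a - ‖α‖)) := by positivity
      _ = (a - ‖α‖) * x ^ 2 + (1 + ‖β‖) ^ 2 / (4 * (a - ‖α‖)) - (1 + ‖β‖) * x := by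
        field_simp; ring
  have hexp (z : ℂ) : ‖Complex.exp (α * z ^ 2 + β * z + γ)‖ ≤
      Real.exp (‖α‖ * ‖z‖ ^ 2 + ‖β‖ * ‖z‖ + ‖γ‖) := by
    refine (Complex.norm_exp_le_exp_norm _).trans (Real.exp_le_exp.2 (norm_add₃_le.trans_eq ?_))
    rw [norm_mul, norm_mul, norm_pow]
  refine ⟨K * Real.exp ((1 + ‖β‖) ^ 2 / (4 * (a - ‖α‖)) + ‖γ‖), fun z => ?_⟩
  calc ‖Q.eval z * Complex.exp (α * z ^ 2 + β * z + γ)‖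
      ≤ K * Real.exp ‖z‖ * Real.exp (‖α‖ * ‖z‖ ^ 2 + ‖β‖ * ‖z‖ + ‖γ‖) := by
        rw [norm_mul]
        exact mul_le_mul (hQ z) (hexp z) (norm_nonneg _) (by positivity)
    _ = K * Real.exp ((1 + ‖β‖) * ‖z‖ + ‖α‖ * ‖z‖ ^ 2 + ‖γ‖) := by
        rw [mul_assoc, ← Real.exp_add]; ring_nf
    _ ≤ K * Real.exp ((1 + ‖β‖) ^ 2 / (4 * (a - ‖α‖)) + ‖γ‖ + a * ‖z‖ ^ 2) := by
        refine mul_le_mul_of_nonneg_left (Real.exp_le_exp.2 ?_) hK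
        linarith [young ‖z‖]
    _ = _ := by rw [Real.exp_add _ (a * ‖z‖ ^ 2), mul_assoc]

/-- **Energy bound for finite stellar rank.** A normalizable state whose stellar
function is the product of a polynomial and a Gaussian (i.e. a state of finite
stellar rank) satisfies the energy bound `Σ s^n |ψ_n|² < ∞` for some `s > 1`. -/
theorem energy_bound_of_finite_stellar_rank (ψ : ℕ → ℂ)
    (hsum : Summable fun n => ‖ψ n‖ ^ 2)
    (hpos : 0 < ∑' n, ‖ψ n‖ ^ 2)
    (Q : Polynomial ℂ) (α β γ : ℂ)
    (hF : ∀ z : ℂ, stellar ψ z = Q.eval z * Complex.exp (α * z ^ 2 + β * z + γ)) :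
    ∃ s : ℝ, 1 < s ∧ Summable fun n => s ^ n * ‖ψ n‖ ^ 2 := by
  obtain ⟨a, ha, C, hC⟩ : ∃ a < 1 / 2, ∃ C, ∀ z, ‖stellar ψ z‖ ≤ C * Real.exp (a * ‖z‖ ^ 2) := by
    simp only [hF]
    rcases eq_or_ne Q 0 with rfl | hQ
    · exact ⟨0, one_half_pos, 0, by simp⟩
    have hdecay := tendsto_exp_neg_half_norm_sq_smul_stellar_cobounded hsum
    simp only [hF] at hdecay
    obtain ⟨a, hαa, ha⟩ := exists_between (norm_lt_of_tendsto_exp_neg_mul_norm_sq_smul hQ hdecay)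
    exact ⟨a, ha, exists_forall_norm_eval_mul_cexp_le Q β γ hαa⟩
  have hs : 1 < 3 / 2 - a := by linarith
  have has : 2 * a * (3 / 2 - a) < 1 := by
    have : 0 < (1 - 2 * a) * (1 - a) := mul_pos (by linarith) (by linarith)
    linarith
  exact ⟨3 / 2 - a, hs, summable_pow_mul_norm_sq_of_norm_stellar_le_mul_exp
    (summable_stellar hsum) hC (by positivity) has⟩
end

section
/- For all natural numbers p, q and every real t > 1: Σ_{l=0}^{min(p,q)} 8^l / ( (2l)! (p−l)! (q−l)! ) ≤ ( t^p / (p! q!) ) · ( 1 + 8/(t−1) )^q. -/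
open scoped BigOperators

/-!
Put `a = 8`. Multiplying by `p! q!` turns the `l`-th summand into
`a ^ l * p.choose l * q.choose l` divided by the central binomial coefficient `(2l).choose l`,
which is at least `1`. Writing `a = s * r` with `s = t - 1`, a single term of the binomial
expansion gives `p.choose l * s ^ l ≤ (1 + s) ^ p = t ^ p`, and the remaining terms
`q.choose l * r ^ l` all occur in the expansion of `(1 + r) ^ q`.
-/

section OrderedSemiring

variable {R : Type*} [CommSemiring R] [PartialOrder R] [IsOrderedRing R] {r s : R}

lemma sum_choose_mul_pow_le_one_add_pow (hr : 0 ≤ r) (n : ℕ) (S : Finset ℕ) :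
    ∑ l ∈ S, (n.choose l : R) * r ^ l ≤ (1 + r) ^ n :=
  calc
    ∑ l ∈ S, (n.choose l : R) * r ^ l
        ≤ ∑ l ∈ S ∪ Finset.range (n + 1), (n.choose l : R) * r ^ l :=
      Finset.sum_le_sum_of_subset_of_nonneg Finset.subset_union_left fun l _ _ ↦ by positivity
    _ = ∑ l ∈ Finset.range (n + 1), (n.choose l : R) * r ^ l := by
      refine (Finset.sum_subset Finset.subset_union_right fun l _ hl ↦ ?_).symm
      have hnl : n < l := by rwa [Finset.mem_range_succ_iff, not_le] at hl
      rw [Nat.choose_eq_zero_of_lt hnl, Nat.cast_zero, zero_mul]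
    _ = (1 + r) ^ n := by
      simp only [add_comm 1 r, add_pow, one_pow, mul_one, mul_comm]

lemma choose_mul_pow_le_one_add_pow (hs : 0 ≤ s) (n l : ℕ) :
    (n.choose l : R) * s ^ l ≤ (1 + s) ^ n := by
  simpa only [Finset.sum_singleton] using sum_choose_mul_pow_le_one_add_pow hs n {l}

lemma sum_choose_mul_choose_mul_pow_le (hs : 0 ≤ s) (hr : 0 ≤ r) (p q : ℕ) (S : Finset ℕ) :
    ∑ l ∈ S, (p.choose l : R) * q.choose l * (s * r) ^ l ≤ (1 + s) ^ p * (1 + r) ^ q :=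
  calc
    ∑ l ∈ S, (p.choose l : R) * q.choose l * (s * r) ^ l
        = ∑ l ∈ S, (p.choose l * s ^ l) * (q.choose l * r ^ l) :=
      Finset.sum_congr rfl fun l _ ↦ by rw [mul_pow, mul_mul_mul_comm]
    _ ≤ ∑ l ∈ S, (1 + s) ^ p * (q.choose l * r ^ l) := by
      gcongr with l
      exact choose_mul_pow_le_one_add_pow hs p l
    _ = (1 + s) ^ p * ∑ l ∈ S, q.choose l * r ^ l := (Finset.mul_sum ..).symm
    _ ≤ (1 + s) ^ p * (1 + r) ^ q := by
      gcongr
      · exact pow_nonneg (add_nonneg zero_le_one hs) p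
      · exact sum_choose_mul_pow_le_one_add_pow hr q S

end OrderedSemiring

section OrderedField

open scoped Nat

variable {K : Type*} [Field K]

lemma inv_factorial_mul_factorial_sub_eq [CharZero K] {p q l : ℕ} (hp : l ≤ p) (hq : l ≤ q) :
    (((2 * l)! : K) * (p - l)! * (q - l)!)⁻¹ =
      p.choose l * q.choose l / l.centralBinom / (p ! * q !) := by
  have central : (l.centralBinom : K) = (2 * l)! / (l ! * l !) := by
    rw [Nat.centralBinom, two_mul, Nat.cast_add_choose]
  have factorial_ne_zero (n : ℕ) : (n ! : K) ≠ 0 := mod_cast n.factorial_ne_zero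
  rw [central, Nat.cast_choose K hp, Nat.cast_choose K hq]
  field_simp [factorial_ne_zero]

variable [LinearOrder K] [IsStrictOrderedRing K]

lemma inv_factorial_mul_factorial_sub_le {p q l : ℕ} (hp : l ≤ p) (hq : l ≤ q) :
    (((2 * l)! : K) * (p - l)! * (q - l)!)⁻¹ ≤ p.choose l * q.choose l / (p ! * q !) := by
  have one_le_centralBinom : (1 : K) ≤ l.centralBinom := mod_cast l.centralBinom_pos
  rw [inv_factorial_mul_factorial_sub_eq hp hq]
  gcongr
  exact div_le_self (by positivity) one_le_centralBinom

theorem hermite_coeff_bound_even_general (p q : ℕ) {a t : K} (ha : 0 ≤ a) (ht : 1 < t) :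
    ∑ l ∈ Finset.range (min p q + 1), a ^ l / ((2 * l)! * (p - l)! * (q - l)!) ≤
      t ^ p / (p ! * q !) * (1 + a / (t - 1)) ^ q := by
  have hs : 0 < t - 1 := sub_pos.mpr ht
  have factor : a = (t - 1) * (a / (t - 1)) := (mul_div_cancel₀ a hs.ne').symm
  calc
    ∑ l ∈ Finset.range (min p q + 1), a ^ l / ((2 * l)! * (p - l)! * (q - l)!)
        ≤ ∑ l ∈ Finset.range (min p q + 1), a ^ l * (p.choose l * q.choose l / (p ! * q !)) := by
      refine Finset.sum_le_sum fun l hl ↦ ?_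
      obtain ⟨hp, hq⟩ := le_min_iff.mp (Finset.mem_range_succ_iff.mp hl)
      rw [div_eq_mul_inv]
      gcongr
      exact inv_factorial_mul_factorial_sub_le hp hq
    _ = (∑ l ∈ Finset.range (min p q + 1), p.choose l * q.choose l * a ^ l) / (p ! * q !) := by
      rw [Finset.sum_div]
      exact Finset.sum_congr rfl fun l _ ↦ by ring
    _ ≤ t ^ p * (1 + a / (t - 1)) ^ q / (p ! * q !) := by
      gcongr
      have h := sum_choose_mul_choose_mul_pow_le hs.le (div_nonneg ha hs.le) p q
        (Finset.range (min p q + 1))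
      rwa [← factor, add_sub_cancel] at h
    _ = t ^ p / (p ! * q !) * (1 + a / (t - 1)) ^ q := mul_div_right_comm ..

end OrderedField

/-- Combinatorial inequality (even part): for all `p q : ℕ` and real `t > 1`,
`Σ_{l=0}^{min(p,q)} 8^l/((2l)! (p-l)! (q-l)!) ≤ (t^p/(p! q!)) (1 + 8/(t-1))^q`. -/
theorem hermite_coeff_bound_even (p q : ℕ) (t : ℝ) (ht : 1 < t) :
    ∑ l ∈ Finset.range (min p q + 1),
        (8 : ℝ) ^ l /
          (((2 * l).factorial : ℝ) * ((p - l).factorial : ℝ) * ((q - l).factorial : ℝ))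
      ≤ t ^ p / ((p.factorial : ℝ) * (q.factorial : ℝ)) * (1 + 8 / (t - 1)) ^ q :=
  hermite_coeff_bound_even_general p q (by norm_num) ht
end

section
/- For all natural numbers p, q and every real t > 1: Σ_{l=0}^{min(p,q)} 8^l / ( (2l+1)! (p−l)! (q−l)! ) ≤ ( t^p / (p! q!) ) · ( 1 + 2/(t−1) )^q. -/
open scoped BigOperators

/-!
With `a = t - 1` and `b = 2 / (t - 1)`, the constant `8` is `4 * a * b`. The central binomial
estimate `4 ^ l ≤ (2 * l + 1) * (2 * l).choose l` says `4 ^ l * l ! ^ 2 ≤ (2 * l + 1)!`, so the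
`l`-th summand is at most `(a ^ l * p.choose l) * (b ^ l * q.choose l) / (p ! * q !)`. The first
factor is a single term of the binomial expansion of `(1 + a) ^ p`, and summing the second one over
`l` gives at most `(1 + b) ^ q`.
-/

open scoped Nat

theorem four_pow_mul_factorial_sq_le (l : ℕ) : 4 ^ l * l ! ^ 2 ≤ (2 * l + 1)! :=
  calc 4 ^ l * l ! ^ 2
      ≤ (2 * l + 1) * (2 * l).choose l * l ! ^ 2 := by
        gcongr
        exact Nat.four_pow_le_two_mul_add_one_mul_central_binom l
    _ = (2 * l + 1) * ((l + l).choose l * l ! * l !) := by rw [two_mul l]; ring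
    _ = (2 * l + 1)! := by
        rw [Nat.add_choose_mul_factorial_mul_factorial, ← two_mul, Nat.factorial_succ]

theorem sum_pow_mul_choose_le {R : Type*} [CommSemiring R] [PartialOrder R] [IsOrderedRing R]
    {a : R} (ha : 0 ≤ a) (n : ℕ) (s : Finset ℕ) :
    ∑ l ∈ s, a ^ l * n.choose l ≤ (1 + a) ^ n := by
  have term_nonneg (l : ℕ) : 0 ≤ a ^ l * n.choose l :=
    mul_nonneg (pow_nonneg ha l) (Nat.cast_nonneg _)
  have vanish_of_notMem (l : ℕ) (hl : l ∉ Finset.range (n + 1)) : a ^ l * n.choose l = 0 := by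
    rw [Nat.choose_eq_zero_of_lt (by simpa [Nat.lt_succ_iff] using hl), Nat.cast_zero, mul_zero]
  calc ∑ l ∈ s, a ^ l * n.choose l
      ≤ ∑ l ∈ s ∪ Finset.range (n + 1), a ^ l * n.choose l :=
        Finset.sum_le_sum_of_subset_of_nonneg Finset.subset_union_left fun l _ _ => term_nonneg l
    _ = ∑ l ∈ Finset.range (n + 1), a ^ l * n.choose l :=
        (Finset.sum_subset Finset.subset_union_right fun l _ hl => vanish_of_notMem l hl).symm
    _ = (1 + a) ^ n := by simp only [add_comm 1 a, add_pow, one_pow, mul_one]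

theorem pow_mul_choose_le {R : Type*} [CommSemiring R] [PartialOrder R] [IsOrderedRing R]
    {a : R} (ha : 0 ≤ a) (n l : ℕ) : a ^ l * n.choose l ≤ (1 + a) ^ n := by
  simpa only [Finset.sum_singleton] using sum_pow_mul_choose_le ha n {l}

section LinearOrderedField

variable {K : Type*} [Field K] [LinearOrder K] [IsStrictOrderedRing K] {a b : K}

theorem four_mul_mul_pow_div_factorial_le {p q l : ℕ} (ha : 0 ≤ a) (hb : 0 ≤ b)
    (hp : l ≤ p) (hq : l ≤ q) :
    (4 * a * b) ^ l / ((2 * l + 1)! * (p - l)! * (q - l)!) ≤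
      (a ^ l * p.choose l) * (b ^ l * q.choose l) / (p ! * q !) := by
  have factorial_bound : (4 : K) ^ l * l ! ^ 2 ≤ (2 * l + 1)! :=
    mod_cast four_pow_mul_factorial_sq_le l
  calc (4 * a * b) ^ l / ((2 * l + 1)! * (p - l)! * (q - l)!)
      ≤ (4 * a * b) ^ l / (4 ^ l * l ! ^ 2 * (p - l)! * (q - l)!) := by gcongr
    _ = (a ^ l * p.choose l) * (b ^ l * q.choose l) / (p ! * q !) := by
        rw [Nat.cast_choose K hp, Nat.cast_choose K hq, mul_pow, mul_pow]
        field_simp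

theorem hermite_coeff_bound_odd_general (ha : 0 ≤ a) (hb : 0 ≤ b) (p q : ℕ) :
    ∑ l ∈ Finset.range (min p q + 1), (4 * a * b) ^ l / ((2 * l + 1)! * (p - l)! * (q - l)!) ≤
      (1 + a) ^ p / (p ! * q !) * (1 + b) ^ q :=
  calc ∑ l ∈ Finset.range (min p q + 1), (4 * a * b) ^ l / ((2 * l + 1)! * (p - l)! * (q - l)!)
      ≤ ∑ l ∈ Finset.range (min p q + 1),
          (1 + a) ^ p / (p ! * q !) * (b ^ l * q.choose l) := by
        refine Finset.sum_le_sum fun l hl => ?_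
        obtain ⟨hp, hq⟩ := le_min_iff.mp (Finset.mem_range_succ_iff.mp hl)
        refine (four_mul_mul_pow_div_factorial_le ha hb hp hq).trans ?_
        rw [mul_div_right_comm]
        gcongr
        exact pow_mul_choose_le ha p l
    _ = (1 + a) ^ p / (p ! * q !) * ∑ l ∈ Finset.range (min p q + 1), b ^ l * q.choose l :=
        (Finset.mul_sum ..).symm
    _ ≤ (1 + a) ^ p / (p ! * q !) * (1 + b) ^ q := by
        gcongr
        exact sum_pow_mul_choose_le hb q _

end LinearOrderedField

/-- Combinatorial inequality (odd part): for all `p q : ℕ` and real `t > 1`,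
`Σ_{l=0}^{min(p,q)} 8^l/((2l+1)! (p-l)! (q-l)!) ≤ (t^p/(p! q!)) (1 + 2/(t-1))^q`. -/
theorem hermite_coeff_bound_odd (p q : ℕ) (t : ℝ) (ht : 1 < t) :
    ∑ l ∈ Finset.range (min p q + 1),
        (8 : ℝ) ^ l /
          (((2 * l + 1).factorial : ℝ) * ((p - l).factorial : ℝ) * ((q - l).factorial : ℝ))
      ≤ t ^ p / ((p.factorial : ℝ) * (q.factorial : ℝ)) * (1 + 2 / (t - 1)) ^ q := by
  have ht' : 0 < t - 1 := sub_pos.mpr ht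
  have eight_eq : 4 * (t - 1) * (2 / (t - 1)) = 8 := by field_simp; norm_num
  simpa only [eight_eq, add_sub_cancel] using
    hermite_coeff_bound_odd_general ht'.le (div_pos two_pos ht').le p q
end

section
/- (Motion of the zeros of the extended wavefunction under Gaussian dynamics.) Let r ≥ 1, let A, B, C, D, E, F be real numbers, and let I ⊆ ℝ be an open interval. Let a, b, c : I → ℂ be differentiable and λ_1, …, λ_r : I → ℂ be twice differentiable with λ_j(t) ≠ λ_k(t) for all t ∈ I and all j ≠ k. Define ψ(z,t) = e^{a(t) z² + b(t) z + c(t)} ∏_{k=1}^r (z − λ_k(t)). Assume that for all z ∈ ℂ and t ∈ I, ψ satisfies the Schrödinger equation i ∂_t ψ = A z² ψ − B ∂_z² ψ − i C ( z ∂_z ψ + ψ/2 ) + D z ψ − i E ∂_z ψ + F ψ (the position representation of the quadratic Hamiltonian A x̂² + B p̂² + C (x̂p̂ + p̂x̂)/2 + D x̂ + E p̂ + F). Then for all t ∈ I and all 1 ≤ k ≤ r: (i) a'(t) = 4iB a(t)² − 2C a(t) − iA; (ii) b'(t) = 4iB a(t) b(t) − C b(t) − 2E a(t) − iD; (iii)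 λ_k'(t) = λ_k(t)(C − 4iB a(t)) − 2iB b(t) + E − 2iB Σ_{m≠k} 1/(λ_k(t) − λ_m(t)); (iv) λ_k''(t) = (C² − 4AB) λ_k(t) + CE − 2BD + 8B² Σ_{m≠k} 1/(λ_k(t) − λ_m(t))³. -/
open scoped BigOperators

/-! Write `ψ = e^Q p` with `Q = a z² + b z + c` and `p = ∏ (z - λ_k)`. Dividing the Schrödinger
equation by `e^Q` leaves a polynomial identity
`G p = ∑ λ_k' ∏_{j ≠ k} (z - λ_j) + V p' + W p''` with `G` quadratic, `V` linear and `W` constant.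
The right-hand side has degree at most `deg p`, so `G` is constant: the vanishing of its two higher
coefficients gives the equations for `a` and `b`. At the simple zero `λ_k` one has
`p'' = 2 p' ∑ 1 / (λ_k - λ_m)`, which turns the identity into the first-order equation for `λ_k`.
When that equation is differentiated, the three-body terms cancel by antisymmetry and only
inverse-cube forces remain. -/

open Polynomial in
/-- The polynomial `∑ u_k ∏_{j ≠ k} (X - v_j)`, which is minus the time derivative of
`∏ (X - v_k)` when the node `v_k` moves with velocity `u_k`. -/
noncomputable def nodalVelocity {R ι : Type*} [CommRing R] [DecidableEq ι] (s : Finset ι)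
    (v u : ι → R) : R[X] :=
  ∑ k ∈ s, C (u k) * Lagrange.nodal (s.erase k) v

/-- The logarithmic (two-dimensional Coulomb) force `∑_{m ≠ k} 1 / (v_k - v_m)` that the points of
the configuration `v` exert on its `k`-th point. -/
def logForce {K ι : Type*} [Field K] [DecidableEq ι] (s : Finset ι) (v : ι → K) (k : ι) : K :=
  ∑ m ∈ s.erase k, 1 / (v k - v m)

section Nodal

open Polynomial Lagrange

lemma eq_zero_of_natDegree_quadratic_eq_zero {R : Type*} [Semiring R] {x y w : R}
    (h : (C x * X ^ 2 + C y * X + C w).natDegree = 0) : x = 0 ∧ y = 0 := by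
  have coeff_eq_zero (n : ℕ) (hn : 0 < n) : (C x * X ^ 2 + C y * X + C w).coeff n = 0 :=
    coeff_eq_zero_of_natDegree_lt (h.trans_lt hn)
  constructor
  · simpa [coeff_X, coeff_C] using coeff_eq_zero 2 two_pos
  · simpa [coeff_X, coeff_C] using coeff_eq_zero 1 one_pos

lemma eval_derivative_nodal_node_ne_zero {K ι : Type*} [Field K] {s : Finset ι} {v : ι → K} {k : ι}
    (hv : Set.InjOn v s) (hk : k ∈ s) : (derivative (nodal s v)).eval (v k) ≠ 0 := by
  classical
  rw [eval_nodal_derivative_eval_node_eq hk]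
  refine eval_nodal_not_at_node fun m hm h => ?_
  exact Finset.ne_of_mem_erase hm (hv (Finset.mem_of_mem_erase hm) hk h.symm)

variable {R ι : Type*} [CommRing R] [DecidableEq ι] {s : Finset ι} {k : ι}

lemma eval_nodalVelocity_node (v u : ι → R) (hk : k ∈ s) :
    (nodalVelocity s v u).eval (v k) = u k * (derivative (nodal s v)).eval (v k) := by
  rw [nodalVelocity, eval_finsetSum, Finset.sum_eq_single_of_mem k hk, eval_C_mul,
    eval_nodal_derivative_eval_node_eq hk]
  intro j _ hjk
  rw [eval_C_mul, eval_nodal_at_node (Finset.mem_erase.2 ⟨hjk.symm, hk⟩), mul_zero]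

lemma natDegree_nodalVelocity_le (v u : ι → R) : (nodalVelocity s v u).natDegree ≤ s.card := by
  nontriviality R
  refine natDegree_sum_le_of_forall_le _ _ fun k _ => (natDegree_C_mul_le _ _).trans ?_
  rw [natDegree_nodal]
  exact Finset.card_erase_le

lemma eval_derivative_derivative_nodal_node (v : ι → R) (hk : k ∈ s) :
    (derivative (derivative (nodal s v))).eval (v k) =
      2 * (derivative (nodal (s.erase k) v)).eval (v k) := by
  rw [nodal_eq_mul_nodal_erase hk]
  simp only [derivative_mul, derivative_X_sub_C, derivative_add, derivative_one, eval_add, eval_mul,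
    eval_sub, eval_X, eval_C, eval_one, eval_zero, sub_self]
  ring

lemma hasDerivAt_eval_nodal {𝕜 𝔸 : Type*} [NontriviallyNormedField 𝕜] [NormedCommRing 𝔸]
    [NormedAlgebra 𝕜 𝔸] {t : 𝕜} {x : ι → 𝕜 → 𝔸} {x' : ι → 𝔸}
    (hx : ∀ k ∈ s, HasDerivAt (x k) (x' k) t) (z : 𝔸) :
    HasDerivAt (fun τ => (nodal s fun k => x k τ).eval z)
      (-(nodalVelocity s (fun k => x k t) x').eval z) t := by
  simp only [eval_nodal, nodalVelocity, eval_finsetSum, eval_C_mul]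
  refine (HasDerivAt.fun_finsetProd fun k hk => (hx k hk).const_sub z).congr_deriv ?_
  rw [← Finset.sum_neg_distrib]
  exact Finset.sum_congr rfl fun k _ => by rw [smul_eq_mul, mul_neg, mul_comm]

variable {K : Type*} [Field K] {v : ι → K}

lemma eval_derivative_nodal_erase_node (hv : Set.InjOn v s) (hk : k ∈ s) :
    (derivative (nodal (s.erase k) v)).eval (v k) =
      (derivative (nodal s v)).eval (v k) * logForce s v k := by
  rw [eval_nodal_derivative_eval_node_eq hk, derivative_nodal, eval_finsetSum, logForce,
    Finset.mul_sum]
  refine Finset.sum_congr rfl fun m hm => ?_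
  have hne : v k - v m ≠ 0 := sub_ne_zero.2 fun h =>
    Finset.ne_of_mem_erase hm (hv (Finset.mem_of_mem_erase hm) hk h.symm)
  rw [nodal_eq_mul_nodal_erase hm, eval_mul, eval_sub, eval_X, eval_C]
  field_simp

variable {G V W : K[X]} {u : ι → K}

lemma natDegree_eq_zero_of_mul_nodal_eq (hV : V.natDegree ≤ 1) (hW : W.natDegree ≤ 2)
    (h : G * nodal s v = nodalVelocity s v u + V * derivative (nodal s v)
      + W * derivative (derivative (nodal s v))) :
    G.natDegree = 0 := by
  set p := nodal s v
  have hpdeg : p.natDegree = s.card := natDegree_nodal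
  rcases eq_or_ne G 0 with rfl | hG
  · exact natDegree_zero
  have first_order : (V * derivative p).natDegree ≤ s.card := by
    rcases eq_or_ne p.natDegree 0 with h0 | h0
    · simp [derivative_of_natDegree_zero h0]
    · have := natDegree_derivative_lt h0
      have := natDegree_mul_le (p := V) (q := derivative p)
      omega
  have second_order : (W * derivative (derivative p)).natDegree ≤ s.card := by
    rcases eq_or_ne (derivative p).natDegree 0 with h0 | h0
    · simp [derivative_of_natDegree_zero h0]
    · have := natDegree_derivative_lt h0
      have := natDegree_derivative_le p
      have := natDegree_mul_le (p := W) (q := derivative (derivative p))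
      omega
  have hle : (G * p).natDegree ≤ s.card := h ▸
    natDegree_add_le_of_degree_le
      (natDegree_add_le_of_degree_le (natDegree_nodalVelocity_le v u) first_order) second_order
  rw [natDegree_mul hG nodal_ne_zero, hpdeg] at hle
  omega

lemma velocity_eq_of_mul_nodal_eq (hv : Set.InjOn v s)
    (h : G * nodal s v = nodalVelocity s v u + V * derivative (nodal s v)
      + W * derivative (derivative (nodal s v))) (hk : k ∈ s) :
    u k = -V.eval (v k) - 2 * W.eval (v k) * logForce s v k := by
  have hnode := congrArg (eval (v k)) h
  simp only [eval_mul, eval_add, eval_nodal_at_node hk, eval_nodalVelocity_node v u hk,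
    eval_derivative_derivative_nodal_node v hk, eval_derivative_nodal_erase_node hv hk] at hnode
  refine mul_right_cancel₀ (eval_derivative_nodal_node_ne_zero hv hk) ?_
  linear_combination -hnode

end Nodal

section LogForce

lemma sum_sum_eq_zero_of_antisymm {M ι : Type*} [AddCommMonoid M] {s : Finset ι}
    {f : ι → ι → M} (hanti : ∀ i ∈ s, ∀ j ∈ s, f i j + f j i = 0) (hdiag : ∀ i ∈ s, f i i = 0) :
    ∑ i ∈ s, ∑ j ∈ s, f i j = 0 := by
  rw [← Finset.sum_product']
  refine Finset.sum_involution (fun x _ => x.swap) ?_ ?_ ?_ ?_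
  · intro x hx
    obtain ⟨hi, hj⟩ := Finset.mem_product.1 hx
    exact hanti _ hi _ hj
  · rintro ⟨i, j⟩ hx hne heq
    obtain rfl : j = i := congrArg Prod.fst heq
    exact hne (hdiag _ (Finset.mem_product.1 hx).1)
  · exact fun x hx => Finset.mem_product.2 (Finset.mem_product.1 hx).symm
  · exact fun x _ => x.swap_swap

variable {K ι : Type*} [Field K] [DecidableEq ι] {s : Finset ι} {v : ι → K} {k m : ι}

-- The term `j = m` of the sum on the right is `1 / 0 = 0`.
lemma logForce_sub_logForce (hv : Set.InjOn v s) (hk : k ∈ s) (hm : m ∈ s) (hkm : k ≠ m) :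
    logForce s v k - logForce s v m = 2 / (v k - v m)
      - (v k - v m) * ∑ j ∈ s.erase k, 1 / ((v k - v j) * (v m - v j)) := by
  have hne {i j : ι} (hi : i ∈ s) (hj : j ∈ s) (hij : i ≠ j) : v i - v j ≠ 0 :=
    sub_ne_zero.2 (hv.ne hi hj hij)
  have hm' : m ∈ s.erase k := Finset.mem_erase.2 ⟨hkm.symm, hm⟩
  have hk' : k ∈ s.erase m := Finset.mem_erase.2 ⟨hkm, hk⟩
  have others : ∑ j ∈ (s.erase k).erase m, 1 / (v k - v j)
      - ∑ j ∈ (s.erase k).erase m, 1 / (v m - v j)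
      = -((v k - v m) * ∑ j ∈ (s.erase k).erase m, 1 / ((v k - v j) * (v m - v j))) := by
    rw [← Finset.sum_sub_distrib, Finset.mul_sum, ← Finset.sum_neg_distrib]
    refine Finset.sum_congr rfl fun j hj => ?_
    simp only [Finset.mem_erase] at hj
    have hkj := hne hk hj.2.2 hj.2.1.symm
    have hmj := hne hm hj.2.2 hj.1.symm
    field_simp
    ring
  have reciprocal : 1 / (v k - v m) - 1 / (v m - v k) = 2 / (v k - v m) := by
    rw [← neg_sub (v k) (v m), one_div_neg_eq_neg_one_div]
    ring
  rw [logForce, logForce, ← Finset.add_sum_erase _ _ hm', ← Finset.add_sum_erase _ _ hk',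
    ← Finset.add_sum_erase _ _ hm', Finset.erase_right_comm (a := m) (b := k), sub_self, mul_zero,
    div_zero, zero_add]
  linear_combination others + reciprocal

lemma sum_logForce_sub_div_sq (hv : Set.InjOn v s) (hk : k ∈ s) :
    ∑ m ∈ s.erase k, (logForce s v k - logForce s v m) / (v k - v m) ^ 2 =
      2 * ∑ m ∈ s.erase k, 1 / (v k - v m) ^ 3 := by
  have pairwise : ∀ m ∈ s.erase k, (logForce s v k - logForce s v m) / (v k - v m) ^ 2 =
      2 * (1 / (v k - v m) ^ 3)
        - ∑ j ∈ s.erase k, 1 / ((v k - v m) * (v k - v j) * (v m - v j)) := by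
    intro m hm
    obtain ⟨hmk, hms⟩ := Finset.mem_erase.1 hm
    have hne : v k - v m ≠ 0 := sub_ne_zero.2 (hv.ne hk hms hmk.symm)
    have factor : ∑ j ∈ s.erase k, 1 / ((v k - v m) * (v k - v j) * (v m - v j)) =
        1 / (v k - v m) * ∑ j ∈ s.erase k, 1 / ((v k - v j) * (v m - v j)) := by
      rw [Finset.mul_sum]
      exact Finset.sum_congr rfl fun j _ => by rw [mul_assoc, one_div_mul_one_div]
    rw [logForce_sub_logForce hv hk hms hmk.symm, factor]
    field_simp
  have three_body : ∑ m ∈ s.erase k, ∑ j ∈ s.erase k,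
      1 / ((v k - v m) * (v k - v j) * (v m - v j)) = 0 := by
    refine sum_sum_eq_zero_of_antisymm (fun m _ j _ => ?_) fun m _ => by simp
    rw [← neg_sub (v m) (v j), mul_neg, one_div_neg_eq_neg_one_div, mul_comm (v k - v j),
      add_neg_cancel]
  rw [Finset.sum_congr rfl pairwise, Finset.sum_sub_distrib, three_body, sub_zero, Finset.mul_sum]

variable {𝕜 𝔸 : Type*} [NontriviallyNormedField 𝕜] [NontriviallyNormedField 𝔸]
  [NormedAlgebra 𝕜 𝔸] {t : 𝕜}

lemma hasDerivAt_logForce {x : ι → 𝕜 → 𝔸} {x' : ι → 𝔸}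
    (hx : ∀ m ∈ s, HasDerivAt (x m) (x' m) t) (hinj : Set.InjOn (fun m => x m t) s) (hk : k ∈ s) :
    HasDerivAt (fun τ => logForce s (fun m => x m τ) k)
      (-∑ m ∈ s.erase k, (x' k - x' m) / (x k t - x m t) ^ 2) t := by
  rw [← Finset.sum_neg_distrib]
  refine HasDerivAt.fun_sum fun m hm => ?_
  obtain ⟨hmk, hms⟩ := Finset.mem_erase.1 hm
  have hne : x k t - x m t ≠ 0 := sub_ne_zero.2 (hinj.ne hk hms hmk.symm)
  simpa only [one_div, neg_div] using ((hx k hk).fun_sub (hx m hms)).fun_inv hne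

lemma hasDerivAt_affine_add_logForce {x : ι → 𝕜 → 𝔸} {α β : 𝕜 → 𝔸} {α' β' κ : 𝔸}
    (hα : HasDerivAt α α' t) (hβ : HasDerivAt β β' t)
    (hx : ∀ m ∈ s, HasDerivAt (x m)
      (α t * x m t + β t + κ * logForce s (fun j => x j t) m) t)
    (hinj : Set.InjOn (fun m => x m t) s) (hk : k ∈ s) :
    HasDerivAt (fun τ => α τ * x k τ + β τ + κ * logForce s (fun j => x j τ) k)
      ((α' + α t ^ 2) * x k t + (β' + α t * β t)
        - 2 * κ ^ 2 * ∑ m ∈ s.erase k, 1 / (x k t - x m t) ^ 3) t := by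
  set S : ι → 𝔸 := logForce s fun j => x j t
  have relative : ∑ m ∈ s.erase k, (α t * x k t + β t + κ * S k - (α t * x m t + β t + κ * S m))
        / (x k t - x m t) ^ 2 =
      α t * S k + κ * ∑ m ∈ s.erase k, (S k - S m) / (x k t - x m t) ^ 2 := by
    have force : α t * S k = ∑ m ∈ s.erase k, α t * (1 / (x k t - x m t)) := Finset.mul_sum ..
    rw [force, Finset.mul_sum, ← Finset.sum_add_distrib]
    refine Finset.sum_congr rfl fun m hm => ?_
    obtain ⟨hmk, hms⟩ := Finset.mem_erase.1 hm
    have hne : x k t - x m t ≠ 0 := sub_ne_zero.2 (hinj.ne hk hms hmk.symm)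
    field_simp
    ring
  refine (((hα.mul (hx k hk)).add hβ).add
    ((hasDerivAt_logForce hx hinj hk).const_mul κ)).congr_deriv ?_
  rw [relative, sum_logForce_sub_div_sq hinj hk]
  ring

end LogForce

section Schrodinger

open Polynomial (derivative eval)
open Complex (I exp)

/-- The quadratic Hamiltonian `A x̂² + B p̂² + C (x̂p̂ + p̂x̂)/2 + D x̂ + E p̂ + F` acting on
functions of the complexified position, with `x̂ ↦ z` and `p̂ ↦ -i ∂_z`. -/
noncomputable def quadraticHamiltonian (A B C D E F : ℂ) (f : ℂ → ℂ) (z : ℂ) : ℂ :=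
  A * z ^ 2 * f z - B * deriv (deriv f) z - I * C * (z * deriv f z + f z / 2) + D * z * f z
    - I * E * deriv f z + F * f z

/-- The extended wavefunction of a state of stellar rank `r = card ι`: a Gaussian with parameters
`a`, `b`, `c` times the monic polynomial with zeros `v`. -/
noncomputable def stellarWave {ι : Type*} [Fintype ι] (a b c : ℂ) (v : ι → ℂ) (z : ℂ) : ℂ :=
  exp (a * z ^ 2 + b * z + c) * ∏ k, (z - v k)

variable {ι : Type*} [Fintype ι]

lemma stellarWave_eq_exp_mul_eval_nodal (a b c : ℂ) (v : ι → ℂ) (z : ℂ) :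
    stellarWave a b c v z =
      exp (a * z ^ 2 + b * z + c) * (Lagrange.nodal Finset.univ v).eval z := by
  rw [stellarWave, Lagrange.eval_nodal]

lemma hasDerivAt_exp_mul_eval (Q P : Polynomial ℂ) (z : ℂ) :
    HasDerivAt (fun w => exp (Q.eval w) * P.eval w)
      (exp (Q.eval z) * (derivative P + derivative Q * P).eval z) z := by
  refine ((Q.hasDerivAt z).cexp.mul (P.hasDerivAt z)).congr_deriv ?_
  rw [Polynomial.eval_add, Polynomial.eval_mul]
  ring

lemma deriv_exp_mul_eval (Q P : Polynomial ℂ) :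
    deriv (fun w => exp (Q.eval w) * P.eval w) =
      fun z => exp (Q.eval z) * (derivative P + derivative Q * P).eval z :=
  funext fun z => (hasDerivAt_exp_mul_eval Q P z).deriv

-- Conjugating by `e^Q` replaces `∂_z` by `∂_z + Q'`.
lemma quadraticHamiltonian_exp_mul_eval (A B C D E F : ℂ) (Q P : Polynomial ℂ) (z : ℂ) :
    quadraticHamiltonian A B C D E F (fun w => exp (Q.eval w) * P.eval w) z =
      exp (Q.eval z) *
        ((A * z ^ 2 - B * ((derivative (derivative Q)).eval z + (derivative Q).eval z ^ 2)
            - I * C * (z * (derivative Q).eval z + 1 / 2) + D * z - I * E * (derivative Q).eval z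
            + F) * P.eval z
          - (2 * B * (derivative Q).eval z + I * C * z + I * E) * (derivative P).eval z
          - B * (derivative (derivative P)).eval z) := by
  rw [quadraticHamiltonian, deriv_exp_mul_eval, deriv_exp_mul_eval]
  simp only [Polynomial.derivative_add, Polynomial.derivative_mul, Polynomial.eval_add,
    Polynomial.eval_mul]
  ring

lemma quadraticHamiltonian_stellarWave (A B C D E F a b c : ℂ) (v : ι → ℂ) (z : ℂ) :
    quadraticHamiltonian A B C D E F (stellarWave a b c v) z =
      exp (a * z ^ 2 + b * z + c) *
        ((A * z ^ 2 - B * (2 * a + (2 * a * z + b) ^ 2) - I * C * (z * (2 * a * z + b) + 1 / 2)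
            + D * z - I * E * (2 * a * z + b) + F) * (Lagrange.nodal Finset.univ v).eval z
          - (2 * B * (2 * a * z + b) + I * C * z + I * E)
            * (derivative (Lagrange.nodal Finset.univ v)).eval z
          - B * (derivative (derivative (Lagrange.nodal Finset.univ v))).eval z) := by
  set Q : Polynomial ℂ := .C a * .X ^ 2 + .C b * .X + .C c with hQ
  have eval_Q (w : ℂ) : Q.eval w = a * w ^ 2 + b * w + c := by simp [hQ]
  have eval_Q' : (derivative Q).eval z = 2 * a * z + b := by simp [hQ]; ring
  have eval_Q'' : (derivative (derivative Q)).eval z = 2 * a := by simp [hQ]; ring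
  have hwave : stellarWave a b c v =
      fun w => exp (Q.eval w) * (Lagrange.nodal Finset.univ v).eval w :=
    funext fun w => by rw [stellarWave_eq_exp_mul_eval_nodal, eval_Q]
  rw [hwave, quadraticHamiltonian_exp_mul_eval, eval_Q, eval_Q', eval_Q'']

variable [DecidableEq ι] {𝕜 : Type*} [NontriviallyNormedField 𝕜] [NormedAlgebra 𝕜 ℂ] {t : 𝕜}

lemma hasDerivAt_stellarWave {a b c : 𝕜 → ℂ} {x : ι → 𝕜 → ℂ} {a' b' c' : ℂ} {x' : ι → ℂ}
    (ha : HasDerivAt a a' t) (hb : HasDerivAt b b' t) (hc : HasDerivAt c c' t)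
    (hx : ∀ k, HasDerivAt (x k) (x' k) t) (z : ℂ) :
    HasDerivAt (fun τ => stellarWave (a τ) (b τ) (c τ) (fun k => x k τ) z)
      (exp (a t * z ^ 2 + b t * z + c t) *
        ((a' * z ^ 2 + b' * z + c') * (Lagrange.nodal Finset.univ fun k => x k t).eval z
          - (nodalVelocity Finset.univ (fun k => x k t) x').eval z)) t := by
  simp only [stellarWave_eq_exp_mul_eval_nodal]
  have hexponent := ((ha.mul_const (z ^ 2)).fun_add (hb.mul_const z)).fun_add hc
  refine (hexponent.cexp.mul (hasDerivAt_eval_nodal (fun k _ => hx k) z)).congr_deriv ?_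
  ring

lemma mul_nodal_eq_of_schrodinger {A B C D E F a b c a' b' c' : ℂ} {v u : ι → ℂ}
    (h : ∀ z, I * (exp (a * z ^ 2 + b * z + c) *
        ((a' * z ^ 2 + b' * z + c') * (Lagrange.nodal Finset.univ v).eval z
          - (nodalVelocity Finset.univ v u).eval z)) =
      quadraticHamiltonian A B C D E F (stellarWave a b c v) z) :
    (.C (a' - (4 * I * B * a ^ 2 - 2 * C * a - I * A)) * .X ^ 2
        + .C (b' - (4 * I * B * a * b - C * b - 2 * E * a - I * D)) * .X
        + .C (c' - (I * B * (2 * a + b ^ 2) - C / 2 - E * b - I * F)))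
      * Lagrange.nodal Finset.univ v =
    nodalVelocity Finset.univ v u
      + (.C (4 * I * B * a - C) * .X + .C (2 * I * B * b - E))
        * derivative (Lagrange.nodal Finset.univ v)
      + .C (I * B) * derivative (derivative (Lagrange.nodal Finset.univ v)) := by
  refine Polynomial.funext fun z => ?_
  have hz := h z
  rw [quadraticHamiltonian_stellarWave, mul_left_comm] at hz
  have hpoly := mul_left_cancel₀ (Complex.exp_ne_zero _) hz
  simp only [Polynomial.eval_mul, Polynomial.eval_add, Polynomial.eval_C, Polynomial.eval_X,
    Polynomial.eval_pow]
  generalize (Lagrange.nodal Finset.univ v).eval z = p at hpoly ⊢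
  generalize (derivative (Lagrange.nodal Finset.univ v)).eval z = p' at hpoly ⊢
  linear_combination -I * hpoly + ((a' * z ^ 2 + b' * z + c'
    + (2 * a * z + b) * (C * z + E) + C / 2) * p + (C * z + E) * p'
    - (nodalVelocity Finset.univ v u).eval z) * Complex.I_sq

lemma first_order_of_schrodinger {A B C D E F : ℂ} {a b c : 𝕜 → ℂ} {x : ι → 𝕜 → ℂ}
    {a' b' c' : ℂ} {x' : ι → ℂ} (ha : HasDerivAt a a' t) (hb : HasDerivAt b b' t)
    (hc : HasDerivAt c c' t) (hx : ∀ k, HasDerivAt (x k) (x' k) t)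
    (hinj : Function.Injective fun k => x k t)
    (hSch : ∀ z, I * deriv (fun τ => stellarWave (a τ) (b τ) (c τ) (fun k => x k τ) z) t =
      quadraticHamiltonian A B C D E F (stellarWave (a t) (b t) (c t) fun k => x k t) z) :
    a' = 4 * I * B * a t ^ 2 - 2 * C * a t - I * A ∧
    b' = 4 * I * B * a t * b t - C * b t - 2 * E * a t - I * D ∧
    ∀ k, x' k = (C - 4 * I * B * a t) * x k t + (E - 2 * I * B * b t)
      + -(2 * I * B) * logForce Finset.univ (fun m => x m t) k := by
  simp only [(hasDerivAt_stellarWave ha hb hc hx _).deriv] at hSch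
  have hpoly := mul_nodal_eq_of_schrodinger hSch
  obtain ⟨hquadratic, hlinear⟩ := eq_zero_of_natDegree_quadratic_eq_zero <|
    natDegree_eq_zero_of_mul_nodal_eq Polynomial.natDegree_linear_le
      ((Polynomial.natDegree_C _).trans_le zero_le_two) hpoly
  refine ⟨sub_eq_zero.1 hquadratic, sub_eq_zero.1 hlinear, fun k => ?_⟩
  rw [velocity_eq_of_mul_nodal_eq hinj.injOn hpoly (Finset.mem_univ k)]
  simp only [Polynomial.eval_mul, Polynomial.eval_add, Polynomial.eval_C, Polynomial.eval_X]
  ring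

theorem motion_of_zeros_general {A B C D E F : ℂ} {U : Set 𝕜} (hU : IsOpen U)
    {a b c : 𝕜 → ℂ} {lam : ι → 𝕜 → ℂ}
    (ha : ∀ t ∈ U, DifferentiableAt 𝕜 a t) (hb : ∀ t ∈ U, DifferentiableAt 𝕜 b t)
    (hc : ∀ t ∈ U, DifferentiableAt 𝕜 c t) (hlam : ∀ k, ∀ t ∈ U, DifferentiableAt 𝕜 (lam k) t)
    (hinj : ∀ t ∈ U, Function.Injective fun k => lam k t)
    (hSch : ∀ z, ∀ t ∈ U,
      I * deriv (fun τ => stellarWave (a τ) (b τ) (c τ) (fun k => lam k τ) z) t =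
        quadraticHamiltonian A B C D E F (stellarWave (a t) (b t) (c t) fun k => lam k t) z)
    (ht : t ∈ U) :
    deriv a t = 4 * I * B * a t ^ 2 - 2 * C * a t - I * A ∧
    deriv b t = 4 * I * B * a t * b t - C * b t - 2 * E * a t - I * D ∧
    (∀ k, deriv (lam k) t = lam k t * (C - 4 * I * B * a t) - 2 * I * B * b t + E
      - 2 * I * B * ∑ m ∈ Finset.univ.erase k, 1 / (lam k t - lam m t)) ∧
    ∀ k, HasDerivAt (deriv (lam k)) ((C ^ 2 - 4 * A * B) * lam k t + C * E - 2 * B * D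
      + 8 * B ^ 2 * ∑ m ∈ Finset.univ.erase k, 1 / (lam k t - lam m t) ^ 3) t := by
  have first_order := fun τ (hτ : τ ∈ U) =>
    first_order_of_schrodinger (ha τ hτ).hasDerivAt (hb τ hτ).hasDerivAt (hc τ hτ).hasDerivAt
      (fun k => (hlam k τ hτ).hasDerivAt) (hinj τ hτ) fun z => hSch z τ hτ
  obtain ⟨ha', hb', hlam'⟩ := first_order t ht
  refine ⟨ha', hb', fun k => ?_, fun k => ?_⟩
  · rw [hlam' k, logForce]
    ring
  have velocity : deriv (lam k) =ᶠ[nhds t] fun τ => (C - 4 * I * B * a τ) * lam k τ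
      + (E - 2 * I * B * b τ) + -(2 * I * B) * logForce Finset.univ (fun m => lam m τ) k :=
    Filter.eventually_of_mem (hU.mem_nhds ht) fun τ hτ => (first_order τ hτ).2.2 k
  have drift := (ha t ht).hasDerivAt.const_mul (4 * I * B) |>.const_sub C
  have offset := (hb t ht).hasDerivAt.const_mul (2 * I * B) |>.const_sub E
  have acceleration := hasDerivAt_affine_add_logForce drift offset
    (fun m _ => hlam' m ▸ (hlam m t ht).hasDerivAt) (hinj t ht).injOn (Finset.mem_univ k)
  refine (acceleration.congr_of_eventuallyEq velocity).congr_deriv ?_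
  rw [ha', hb']
  linear_combination (4 * A * B * lam k t + 2 * B * D
    - 8 * B ^ 2 * ∑ m ∈ Finset.univ.erase k, 1 / (lam k t - lam m t) ^ 3) * Complex.I_sq

end Schrodinger

/-- **Motion of the zeros of the extended wavefunction under Gaussian dynamics.**
If `ψ(z,t) = e^(a(t)z² + b(t)z + c(t)) ∏_k (z - λ_k(t))` (a stellar rank `r` wavefunction
with pairwise distinct zeros on the open interval `I = (t₀, t₁)`) satisfies the
Schrödinger equation for the quadratic Hamiltonian
`A x̂² + B p̂² + C(x̂p̂ + p̂x̂)/2 + D x̂ + E p̂ + F` (in position representation `x̂ ↦ z`,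
`p̂ ↦ -i ∂_z`), then the Gaussian parameters and the zeros satisfy the stated ODEs,
and the zeros follow a complex Calogero--Moser dynamics. -/
theorem motion_of_zeros (r : ℕ) (hr : 1 ≤ r) (A B C D E F : ℝ) (t₀ t₁ : ℝ)
    (a b c : ℝ → ℂ) (lam : Fin r → ℝ → ℂ)
    (ha : ∀ t ∈ Set.Ioo t₀ t₁, DifferentiableAt ℝ a t)
    (hb : ∀ t ∈ Set.Ioo t₀ t₁, DifferentiableAt ℝ b t)
    (hc : ∀ t ∈ Set.Ioo t₀ t₁, DifferentiableAt ℝ c t)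
    (hlam1 : ∀ k : Fin r, ∀ t ∈ Set.Ioo t₀ t₁, DifferentiableAt ℝ (lam k) t)
    (hlam2 : ∀ k : Fin r, ∀ t ∈ Set.Ioo t₀ t₁, DifferentiableAt ℝ (deriv (lam k)) t)
    (hdist : ∀ t ∈ Set.Ioo t₀ t₁, ∀ j k : Fin r, j ≠ k → lam j t ≠ lam k t)
    (ψ : ℂ → ℝ → ℂ)
    (hψ : ∀ (z : ℂ) (t : ℝ),
      ψ z t = Complex.exp (a t * z ^ 2 + b t * z + c t) * ∏ k : Fin r, (z - lam k t))
    (hSch : ∀ z : ℂ, ∀ t ∈ Set.Ioo t₀ t₁,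
      Complex.I * deriv (fun τ => ψ z τ) t =
        (A : ℂ) * z ^ 2 * ψ z t
          - (B : ℂ) * deriv (deriv (fun w => ψ w t)) z
          - Complex.I * (C : ℂ) * (z * deriv (fun w => ψ w t) z + ψ z t / 2)
          + (D : ℂ) * z * ψ z t
          - Complex.I * (E : ℂ) * deriv (fun w => ψ w t) z
          + (F : ℂ) * ψ z t) :
    ∀ t ∈ Set.Ioo t₀ t₁,
      (deriv a t = 4 * Complex.I * (B : ℂ) * a t ^ 2 - 2 * (C : ℂ) * a t
          - Complex.I * (A : ℂ)) ∧
      (deriv b t = 4 * Complex.I * (B : ℂ) * a t * b t - (C : ℂ) * b t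
          - 2 * (E : ℂ) * a t - Complex.I * (D : ℂ)) ∧
      (∀ k : Fin r, deriv (lam k) t =
        lam k t * ((C : ℂ) - 4 * Complex.I * (B : ℂ) * a t)
          - 2 * Complex.I * (B : ℂ) * b t + (E : ℂ)
          - 2 * Complex.I * (B : ℂ) *
              ∑ m ∈ Finset.univ.erase k, 1 / (lam k t - lam m t)) ∧
      (∀ k : Fin r, deriv (deriv (lam k)) t =
        ((C : ℂ) ^ 2 - 4 * (A : ℂ) * (B : ℂ)) * lam k t
          + (C : ℂ) * (E : ℂ) - 2 * (B : ℂ) * (D : ℂ)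
          + 8 * (B : ℂ) ^ 2 *
              ∑ m ∈ Finset.univ.erase k, 1 / (lam k t - lam m t) ^ 3) := by
  intro t ht
  obtain rfl : ψ = fun z t => stellarWave (a t) (b t) (c t) (fun k => lam k t) z := by
    ext z t; exact hψ z t
  obtain ⟨ha', hb', hlam', hlam''⟩ := motion_of_zeros_general isOpen_Ioo ha hb hc hlam1
    (fun t ht j k hjk => not_imp_not.1 (hdist t ht j k) hjk) hSch ht
  exact ⟨ha', hb', hlam', fun k => (hlam'' k).deriv⟩
end

section
/- (Modified Lax equation for matrix harmonic motion.) Let n ≥ 1 and ω ∈ ℂ. Let X, U, Λ : ℝ → M_n(ℂ) be twice differentiable matrix-valued functions such that: U(t) is invertible for every t, U(0) = I, Λ(t) is a diagonal matrix for every t, X(t) = U(t) Λ(t) U(t)⁻¹ for every t, and X''(t) + ω² X(t) = 0 for every t. Define M(t) = −i U(t)⁻¹ U'(t) and L(t) = Λ'(t) + i [M(t), Λ(t)] + iω Λ(t), where [·,·] is the matrix commutator. Then: (i) L'(t) + i [M(t), L(t)] − iω L(t) = 0 for every t; and (ii) if ω ≠ 0, then X(t) = Λ(0) e^{−iωt}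 + (sin(ωt)/ω) L(0) for every t, where sin is the complex sine. -/
open scoped BigOperators

/-- Entrywise derivative of a matrix-valued function of a real variable. -/
noncomputable def matDeriv {n : ℕ} (X : ℝ → Matrix (Fin n) (Fin n) ℂ) (t : ℝ) :
    Matrix (Fin n) (Fin n) ℂ :=
  Matrix.of fun i j => deriv (fun τ => X τ i j) t

/-!
In the moving frame `U`, time differentiation becomes `d/dt + ⁅U⁻¹ U', ·⁆ = d/dt + i⁅M, ·⁆`. Hence
`L = U⁻¹ (X' + iω X) U`, and the modified Lax equation is the factorization
`d²/dt² + ω² = (d/dt - iω) (d/dt + iω)` of the equation of motion, read in this frame. The same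
factorization, and the one with `ω` replaced by `-ω`, give `X' ± iω X` as exponentials, and their
difference is `2iω X`.
-/

section MovingFrame

variable {𝕜 A : Type*} [NontriviallyNormedField 𝕜] [NormedRing A] [HasSummableGeomSeries A]
  [NormedAlgebra 𝕜 A] {U : 𝕜 → Aˣ} {Y : 𝕜 → A} {U' Y' : A} {t : 𝕜}

theorem hasDerivAt_units_inv (hU : HasDerivAt (fun τ => (U τ : A)) U' t) :
    HasDerivAt (fun τ => (↑(U τ)⁻¹ : A)) (-(↑(U t)⁻¹ * U' * ↑(U t)⁻¹)) t := by
  simpa [Function.comp_def] using (hasFDerivAt_ringInverse (𝕜 := 𝕜) (U t)).comp_hasDerivAt t hU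

theorem hasDerivAt_units_inv_conj (hU : HasDerivAt (fun τ => (U τ : A)) U' t)
    (hY : HasDerivAt Y Y' t) :
    HasDerivAt (fun τ => ↑(U τ)⁻¹ * Y τ * U τ)
      (↑(U t)⁻¹ * Y' * U t - ⁅↑(U t)⁻¹ * U', ↑(U t)⁻¹ * Y t * U t⁆) t := by
  refine (((hasDerivAt_units_inv hU).mul hY).mul hU).congr_deriv ?_
  simp only [Pi.mul_apply, Ring.lie_def, mul_assoc, neg_mul, add_mul, Units.mul_inv_cancel_left]
  abel

end MovingFrame

section HarmonicMotion

theorem hasDerivAt_add_smul_of_harmonic {𝕜 R E : Type*} [NontriviallyNormedField 𝕜]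
    [NormedAddCommGroup E] [NormedSpace 𝕜 E] [Ring R] [Module R E] [SMulCommClass 𝕜 R E]
    [ContinuousConstSMul R E] {c ω : R} (hc : c ^ 2 = -ω ^ 2) {f f' : 𝕜 → E} {f'' : E} {t : 𝕜}
    (hf : HasDerivAt f (f' t) t) (hf' : HasDerivAt f' f'' t) (hharm : f'' + ω ^ 2 • f t = 0) :
    HasDerivAt (fun τ => f' τ + c • f τ) (c • (f' t + c • f t)) t := by
  refine (hf'.add (hf.const_smul c)).congr_deriv ?_
  rw [eq_neg_of_add_eq_zero_left hharm, smul_add, smul_smul, ← sq, hc, neg_smul, add_comm]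

variable {E : Type*} [NormedAddCommGroup E] [NormedSpace ℂ E]

theorem eq_exp_smul_of_hasDerivAt_smul {c : ℂ} {f : ℝ → E}
    (hf : ∀ t, HasDerivAt f (c • f t) t) (t : ℝ) : f t = Complex.exp (c * t) • f 0 := by
  have hexp (s : ℝ) : HasDerivAt (fun τ : ℝ => Complex.exp (-c * τ))
      (Complex.exp (-c * s) * -c) s := by
    simpa using ((hasDerivAt_id (s : ℂ)).const_mul (-c)).cexp.comp_ofReal
  have hderiv (s : ℝ) : HasDerivAt (fun τ : ℝ => Complex.exp (-c * τ) • f τ) 0 s :=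
    ((hexp s).smul (hf s)).congr_deriv (by module)
  have hconst : Complex.exp (-c * t) • f t = f 0 := by
    simpa using is_const_of_deriv_eq_zero (fun s => (hderiv s).differentiableAt)
      (fun s => (hderiv s).deriv) t 0
  rw [← hconst, smul_smul, ← Complex.exp_add, neg_mul, add_neg_cancel, Complex.exp_zero, one_smul]

theorem eq_exp_smul_add_sin_smul_of_harmonic {ω : ℂ} (hω : ω ≠ 0) {f f' f'' : ℝ → E}
    (hf : ∀ t, HasDerivAt f (f' t) t) (hf' : ∀ t, HasDerivAt f' (f'' t) t)
    (hharm : ∀ t, f'' t + ω ^ 2 • f t = 0) (t : ℝ) :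
    f t = Complex.exp (-Complex.I * ω * t) • f 0
      + (Complex.sin (ω * t) / ω) • (f' 0 + (Complex.I * ω) • f 0) := by
  have hfactor {c : ℂ} (hc : c ^ 2 = -ω ^ 2) :
      f' t + c • f t = Complex.exp (c * t) • (f' 0 + c • f 0) :=
    eq_exp_smul_of_hasDerivAt_smul
      (fun s => hasDerivAt_add_smul_of_harmonic hc (hf s) (hf' s) (hharm s)) t
  have hplus := hfactor (c := Complex.I * ω) (by simp [mul_pow])
  have hminus := hfactor (c := -Complex.I * ω) (by simp [mul_pow])
  have hsin : 2 * Complex.I * ω * (Complex.sin (ω * t) / ω) =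
      Complex.exp (Complex.I * ω * t) - Complex.exp (-Complex.I * ω * t) := by
    rw [show Complex.I * ω * t = ω * t * Complex.I by ring,
      show -Complex.I * ω * t = -(ω * t) * Complex.I by ring, Complex.exp_mul_I,
      Complex.exp_mul_I, Complex.cos_neg, Complex.sin_neg]
    field_simp
    ring
  have htwo : 2 * Complex.I * ω ≠ 0 := by simp [hω]
  apply smul_right_injective E htwo
  simp only [smul_add _ (Complex.exp _ • _), smul_smul _ (Complex.sin _ / _), hsin]
  linear_combination (norm := module) hplus - hminus

end HarmonicMotion

section MatrixDerivative

theorem hasDerivAt_matrix_iff {𝕜 m n E : Type*} [NontriviallyNormedField 𝕜] [Finite m] [Finite n]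
    [NormedAddCommGroup E] [NormedSpace 𝕜 E] {X : 𝕜 → Matrix m n E} {X' : Matrix m n E} {t : 𝕜} :
    HasDerivAt X X' t ↔ ∀ i j, HasDerivAt (fun τ => X τ i j) (X' i j) t := by
  have := Fintype.ofFinite m
  have := Fintype.ofFinite n
  exact hasDerivAt_pi.trans (forall_congr' fun _ => hasDerivAt_pi)

variable {n : ℕ} {X : ℝ → Matrix (Fin n) (Fin n) ℂ} {t : ℝ}

theorem hasDerivAt_matDeriv (hX : ∀ i j, DifferentiableAt ℝ (fun τ => X τ i j) t) :
    HasDerivAt X (matDeriv X t) t :=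
  hasDerivAt_matrix_iff.2 fun i j => (hX i j).hasDerivAt

theorem matDeriv_eq_of_hasDerivAt {X' : Matrix (Fin n) (Fin n) ℂ} (hX : HasDerivAt X X' t) :
    matDeriv X t = X' := by
  ext i j
  exact (hasDerivAt_matrix_iff.1 hX i j).deriv

end MatrixDerivative

theorem modified_lax_harmonic_general {A : Type*} [NormedRing A] [HasSummableGeomSeries A]
    [NormedAlgebra ℂ A] {ω : ℂ} {U : ℝ → Aˣ} {X X' X'' U' Λ Λ' M L : ℝ → A}
    (hX' : ∀ t, HasDerivAt X (X' t) t) (hX'' : ∀ t, HasDerivAt X' (X'' t) t)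
    (hU' : ∀ t, HasDerivAt (fun τ => (U τ : A)) (U' t) t)
    (hΛ' : ∀ t, HasDerivAt Λ (Λ' t) t)
    (hX : ∀ t, X t = U t * Λ t * ↑(U t)⁻¹)
    (hharm : ∀ t, X'' t + ω ^ 2 • X t = 0)
    (hM : ∀ t, M t = (-Complex.I) • (↑(U t)⁻¹ * U' t))
    (hL : ∀ t, L t = Λ' t + Complex.I • ⁅M t, Λ t⁆ + (Complex.I * ω) • Λ t) :
    (∀ t, HasDerivAt L ((Complex.I * ω) • L t - Complex.I • ⁅M t, L t⁆) t) ∧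
    (ω ≠ 0 → ∀ t : ℝ, X t = U 0 * (Complex.exp (-Complex.I * ω * t) • Λ 0
      + (Complex.sin (ω * t) / ω) • L 0) * ↑(U 0)⁻¹) := by
  have hframe (t : ℝ) (B : A) : Complex.I • ⁅M t, B⁆ = ⁅↑(U t)⁻¹ * U' t, B⁆ := by
    simp [hM, Ring.lie_def, smul_smul, sub_eq_add_neg]
  have hΛ_conj : Λ = fun t => ↑(U t)⁻¹ * X t * U t := by
    ext t
    simp [hX, mul_assoc]
  have hΛ'_conj (t : ℝ) : Λ' t + ⁅↑(U t)⁻¹ * U' t, Λ t⁆ = ↑(U t)⁻¹ * X' t * U t := by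
    rw [← eq_sub_iff_add_eq]
    subst hΛ_conj
    exact (hΛ' t).unique (hasDerivAt_units_inv_conj (hU' t) (hX' t))
  have hL_conj : L = fun t => ↑(U t)⁻¹ * (X' t + (Complex.I * ω) • X t) * U t := by
    ext t
    rw [hL, hframe, hΛ'_conj, hΛ_conj, mul_add, add_mul, mul_smul_comm, smul_mul_assoc]
  refine ⟨fun t => ?_, fun hω t => ?_⟩
  · have hY : HasDerivAt (fun τ => X' τ + (Complex.I * ω) • X τ)
        ((Complex.I * ω) • (X' t + (Complex.I * ω) • X t)) t :=
      hasDerivAt_add_smul_of_harmonic (by simp [mul_pow]) (hX' t) (hX'' t) (hharm t)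
    rw [hframe, hL_conj]
    simpa only [mul_smul_comm, smul_mul_assoc] using hasDerivAt_units_inv_conj (hU' t) hY
  · rw [eq_exp_smul_add_sin_smul_of_harmonic hω hX' hX'' hharm t, hL_conj, hΛ_conj]
    simp [mul_add, add_mul, mul_assoc]

/-- **Modified Lax equation for matrix harmonic motion** (Olshanetsky–Perelomov
projection method). If `X'' + ω² X = 0` with `X(t) = U(t) Λ(t) U(t)⁻¹`, `U(t)`
invertible, `U(0) = I`, `Λ(t)` diagonal, and `M = -i U⁻¹ U'`,
`L = Λ' + i[M,Λ] + iωΛ`, then (i) `L' + i[M,L] - iωL = 0`, and (ii) if `ω ≠ 0`,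
`X(t) = Λ(0) e^(-iωt) + (sin(ωt)/ω) L(0)`. -/
theorem modified_lax_harmonic (n : ℕ) (hn : 1 ≤ n) (ω : ℂ)
    (X U Λ : ℝ → Matrix (Fin n) (Fin n) ℂ)
    (hXd : ∀ i j : Fin n, Differentiable ℝ (fun t => X t i j) ∧
      Differentiable ℝ (deriv fun t => X t i j))
    (hUd : ∀ i j : Fin n, Differentiable ℝ (fun t => U t i j) ∧
      Differentiable ℝ (deriv fun t => U t i j))
    (hΛd : ∀ i j : Fin n, Differentiable ℝ (fun t => Λ t i j) ∧
      Differentiable ℝ (deriv fun t => Λ t i j))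
    (hUinv : ∀ t : ℝ, IsUnit (U t)) (hU0 : U 0 = 1)
    (hdiag : ∀ t : ℝ, (Λ t).IsDiag)
    (hX : ∀ t : ℝ, X t = U t * Λ t * (U t)⁻¹)
    (hharm : ∀ t : ℝ, matDeriv (matDeriv X) t + ω ^ 2 • X t = 0)
    (M L : ℝ → Matrix (Fin n) (Fin n) ℂ)
    (hM : ∀ t : ℝ, M t = (-Complex.I) • ((U t)⁻¹ * matDeriv U t))
    (hL : ∀ t : ℝ, L t = matDeriv Λ t + Complex.I • (M t * Λ t - Λ t * M t)
      + (Complex.I * ω) • Λ t) :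
    (∀ t : ℝ, matDeriv L t + Complex.I • (M t * L t - L t * M t)
      - (Complex.I * ω) • L t = 0) ∧
    (ω ≠ 0 → ∀ t : ℝ,
      X t = Complex.exp (-Complex.I * ω * (t : ℂ)) • Λ 0
        + (Complex.sin (ω * (t : ℂ)) / ω) • L 0) := by
  lift U to ℝ → (Matrix (Fin n) (Fin n) ℂ)ˣ using hUinv
  simp only [← Matrix.coe_units_inv] at hX hM
  open scoped Matrix.Norms.Operator in
  obtain ⟨hLax, hflow⟩ := modified_lax_harmonic_general
    (fun t => hasDerivAt_matDeriv fun i j => (hXd i j).1 t)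
    (fun t => hasDerivAt_matDeriv fun i j => (hXd i j).2 t)
    (fun t => hasDerivAt_matDeriv fun i j => (hUd i j).1 t)
    (fun t => hasDerivAt_matDeriv fun i j => (hΛd i j).1 t) hX hharm hM hL
  exact ⟨fun t => by rw [matDeriv_eq_of_hasDerivAt (hLax t), Ring.lie_def]; abel,
    by simpa [show (U 0 : Matrix (Fin n) (Fin n) ℂ) = 1 from hU0] using hflow⟩
end
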